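/- arXiv:2512.17813 — 4 statements merged into one kernel-verified Lean document; each statement's English description precedes it below -/
import Mathlib

section
/- Let n ≥ 1 and let f : ℝⁿ → [0,∞) be locally Lebesgue-integrable. Suppose there exist R₁ > 0 and a non-decreasing C¹ function θ : [R₁,∞) → (0,∞) with ∫_{R₁}^∞ ds/(s·θ(s)) = ∞ such that ∫_{B_R} f dx ≤ R²·θ(R) for all R ≥ R₁. Then there exist Lipschitz functions φ_j : ℝⁿ → [0,1], each with compact support, and radii R_j → ∞, such that φ_j ≡ 1 on B_{R_j} for every j and ∫_{ℝⁿ} f(x)·|∇φ_j(x)|² dx → 0 as j → ∞ (so in particular φ_j → 1 in W^{1,∞}_loc(ℝⁿ)). -/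
open MeasureTheory Set Metric Filter
open scoped RealInnerProductSpace Topology ENNReal

noncomputable section

/-! Put `r i = 2 ^ i * R₁` and think of the annuli `r i < ‖x‖ < r (i + 1)` as conductors in series.
By the growth bound, a potential dropping linearly in `‖x‖` from `1` to `0` across the `i`-th
annulus has energy at most `a i = 4 * θ (r (i + 1))`. Distributing the drop over the annuli
`m ≤ i < M` in proportion to `(a i)⁻¹` therefore gives a cut-off of energy at most
`(∑ i ∈ Ico m M, (a i)⁻¹)⁻¹`. Since the integral of `(s * θ s)⁻¹` over `[t, 2 * t]` is at most
`(θ t)⁻¹`, the series `∑ (a i)⁻¹` diverges along with the integral, so this energy is as small as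
desired once `M` is large.
-/

section FiniteSums

variable {ι : Type*} {s : Finset ι}

lemma lipschitzWith_finset_sum {X E : Type*} [PseudoEMetricSpace X] [SeminormedAddCommGroup E]
    {K : ι → NNReal} {f : ι → X → E} (hf : ∀ i ∈ s, LipschitzWith (K i) (f i)) :
    LipschitzWith (∑ i ∈ s, K i) (fun x => ∑ i ∈ s, f i x) := by
  classical
  induction s using Finset.induction_on with
  | empty => simpa using LipschitzWith.const (0 : E)
  | insert i s hi ih =>
    simp only [Finset.sum_insert hi]
    exact (hf i (Finset.mem_insert_self i s)).add
      (ih fun k hk => hf k (Finset.mem_insert_of_mem hk))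

lemma norm_sum_sq_of_pairwise_eq_zero {E : Type*} [SeminormedAddCommGroup E] {v : ι → E}
    (hv : (s : Set ι).Pairwise fun i j => v i = 0 ∨ v j = 0) :
    ‖∑ i ∈ s, v i‖ ^ 2 = ∑ i ∈ s, ‖v i‖ ^ 2 := by
  by_cases h : ∃ k ∈ s, v k ≠ 0
  · obtain ⟨k, hk, hvk⟩ := h
    have hzero : ∀ i ∈ s, i ≠ k → v i = 0 := fun i hi hik => (hv hi hk hik).resolve_right hvk
    rw [Finset.sum_eq_single_of_mem k hk hzero,
      Finset.sum_eq_single_of_mem k hk fun i hi hik => by simp [hzero i hi hik]]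
  · push Not at h
    rw [Finset.sum_eq_zero h, Finset.sum_eq_zero fun i hi => by simp [h i hi]]
    simp

/-- The share of a unit potential drop taken by the `i`-th of the conductors `s` in series, where
`a k > 0` is the conductance of the `k`-th one. These weights minimize the energy
`∑ i ∈ s, w i ^ 2 * a i` among those with sum `1`. -/
def seriesWeight (a : ι → ℝ) (s : Finset ι) (i : ι) : ℝ :=
  (a i)⁻¹ / ∑ k ∈ s, (a k)⁻¹

lemma seriesWeight_nonneg {a : ι → ℝ} (ha : ∀ i, 0 ≤ a i) (s : Finset ι) (i : ι) :
    0 ≤ seriesWeight a s i :=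
  div_nonneg (inv_nonneg.2 (ha i)) (Finset.sum_nonneg fun k _ => inv_nonneg.2 (ha k))

lemma sum_seriesWeight {a : ι → ℝ} (hs : ∑ k ∈ s, (a k)⁻¹ ≠ 0) :
    ∑ i ∈ s, seriesWeight a s i = 1 := by
  simp only [seriesWeight, ← Finset.sum_div, div_self hs]

lemma sum_seriesWeight_sq_mul (a : ι → ℝ) (s : Finset ι) :
    ∑ i ∈ s, seriesWeight a s i ^ 2 * a i = (∑ k ∈ s, (a k)⁻¹)⁻¹ := by
  set S := ∑ k ∈ s, (a k)⁻¹ with hS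
  have hterm (i : ι) : seriesWeight a s i ^ 2 * a i = (a i)⁻¹ / S ^ 2 := by
    rw [seriesWeight, ← hS]
    field_simp
  simp only [hterm, ← Finset.sum_div, ← hS]
  field_simp

end FiniteSums

lemma exists_le_sum_Ico_of_not_summable {u : ℕ → ℝ} (hu : ∀ i, 0 ≤ u i) (hdiv : ¬ Summable u)
    (m : ℕ) (C : ℝ) : ∃ M, C ≤ ∑ i ∈ Finset.Ico m M, u i := by
  have htail : ¬ Summable fun i => u (m + i) := by
    simpa only [add_comm m] using (summable_nat_add_iff m).not.2 hdiv
  obtain ⟨N, hN⟩ := (((not_summable_iff_tendsto_nat_atTop_of_nonneg fun i => hu (m + i)).1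
    htail).eventually_ge_atTop C).exists
  exact ⟨m + N, by simpa only [Finset.sum_Ico_eq_sum_range, add_tsub_cancel_left] using hN⟩

section DyadicComparison

variable {θ : ℝ → ℝ} {R₁ : ℝ}

lemma antitoneOn_inv_id_mul (hR₁ : 0 < R₁) (hpos : ∀ s ∈ Ici R₁, 0 < θ s)
    (hmono : MonotoneOn θ (Ici R₁)) : AntitoneOn (fun s => (s * θ s)⁻¹) (Ici R₁) := by
  intro s hs t ht hst
  have hs₀ : 0 < s := hR₁.trans_le hs
  exact inv_anti₀ (mul_pos hs₀ (hpos s hs))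
    (mul_le_mul hst (hmono hs ht hst) (hpos s hs).le (hs₀.le.trans hst))

lemma intervalIntegrable_inv_id_mul (hR₁ : 0 < R₁) (hpos : ∀ s ∈ Ici R₁, 0 < θ s)
    (hmono : MonotoneOn θ (Ici R₁)) {a b : ℝ} (ha : R₁ ≤ a) (hb : R₁ ≤ b) :
    IntervalIntegrable (fun s => (s * θ s)⁻¹) volume a b :=
  ((antitoneOn_inv_id_mul hR₁ hpos hmono).mono
    fun _ hs => (le_min ha hb).trans hs.1).intervalIntegrable

lemma integral_inv_id_mul_le (hR₁ : 0 < R₁) (hpos : ∀ s ∈ Ici R₁, 0 < θ s)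
    (hmono : MonotoneOn θ (Ici R₁)) {a : ℝ} (ha : R₁ ≤ a) :
    ∫ s in a..(2 * a), (s * θ s)⁻¹ ≤ (θ a)⁻¹ := by
  have ha₀ : 0 < a := hR₁.trans_le ha
  have hle : a ≤ 2 * a := by linarith
  calc ∫ s in a..(2 * a), (s * θ s)⁻¹
      ≤ ∫ _ in a..(2 * a), (a * θ a)⁻¹ :=
        intervalIntegral.integral_mono_on hle
          (intervalIntegrable_inv_id_mul hR₁ hpos hmono ha (ha.trans hle))
          intervalIntegrable_const
          fun s hs => antitoneOn_inv_id_mul hR₁ hpos hmono ha (ha.trans hs.1) hs.1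
    _ = (θ a)⁻¹ := by
        have := (hpos a ha).ne'
        rw [intervalIntegral.integral_const, smul_eq_mul]
        field_simp
        ring

lemma not_summable_inv_dyadic_of_tendsto_integral (hR₁ : 0 < R₁) (hpos : ∀ s ∈ Ici R₁, 0 < θ s)
    (hmono : MonotoneOn θ (Ici R₁))
    (hdiv : Tendsto (fun T => ∫ s in R₁..T, (s * θ s)⁻¹) atTop atTop) :
    ¬ Summable fun i : ℕ => (θ (2 ^ i * R₁))⁻¹ := by
  have hR (i : ℕ) : R₁ ≤ 2 ^ i * R₁ := le_mul_of_one_le_left hR₁.le (one_le_pow₀ one_le_two)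
  have hdyadic : Tendsto (fun i : ℕ => 2 ^ i * R₁) atTop atTop :=
    (tendsto_pow_atTop_atTop_of_one_lt one_lt_two).atTop_mul_const hR₁
  rw [not_summable_iff_tendsto_nat_atTop_of_nonneg fun i => inv_nonneg.2 (hpos _ (hR i)).le]
  refine tendsto_atTop_mono (fun N => ?_) (hdiv.comp hdyadic)
  calc ∫ s in R₁..(2 ^ N * R₁), (s * θ s)⁻¹
      = ∑ i ∈ Finset.range N, ∫ s in (2 ^ i * R₁)..(2 ^ (i + 1) * R₁), (s * θ s)⁻¹ := by
        rw [intervalIntegral.sum_integral_adjacent_intervals fun i _ =>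
          intervalIntegrable_inv_id_mul hR₁ hpos hmono (hR i) (hR (i + 1)), pow_zero, one_mul]
    _ ≤ ∑ i ∈ Finset.range N, (θ (2 ^ i * R₁))⁻¹ := by
        refine Finset.sum_le_sum fun i _ => ?_
        rw [pow_succ', mul_assoc]
        exact integral_inv_id_mul_le hR₁ hpos hmono (hR i)

end DyadicComparison

section AnnularRamp

variable {E : Type*} [SeminormedAddCommGroup E] {a b : ℝ} {x : E}

/-- The radial function that is `0` for `‖x‖ ≤ a`, is `1` for `b ≤ ‖x‖`, and is affine in `‖x‖`
on the annulus in between: the potential of a single annulus. -/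
def annularRamp (a b : ℝ) (x : E) : ℝ :=
  max 0 (min 1 ((b - a)⁻¹ * (‖x‖ - a)))

lemma annularRamp_mem_Icc (a b : ℝ) (x : E) : annularRamp a b x ∈ Icc (0 : ℝ) 1 :=
  ⟨le_max_left _ _, max_le zero_le_one (min_le_left _ _)⟩

lemma annularRamp_of_norm_le (hab : a ≤ b) (hx : ‖x‖ ≤ a) : annularRamp a b x = 0 :=
  max_eq_left <| (min_le_right _ _).trans <|
    mul_nonpos_of_nonneg_of_nonpos (inv_nonneg.2 (sub_nonneg.2 hab)) (sub_nonpos.2 hx)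

lemma annularRamp_of_le_norm (hab : a < b) (hx : b ≤ ‖x‖) : annularRamp a b x = 1 := by
  have hslope : 1 ≤ (b - a)⁻¹ * (‖x‖ - a) := by
    rw [le_inv_mul_iff₀ (sub_pos.2 hab), mul_one]
    exact sub_le_sub_right hx a
  rw [annularRamp, min_eq_left hslope, max_eq_right zero_le_one]

lemma lipschitzWith_annularRamp (a b : ℝ) :
    LipschitzWith ‖(b - a)⁻¹‖₊ (annularRamp a b : E → ℝ) := by
  have hnorm : LipschitzWith 1 fun x : E => ‖x‖ - a := by
    simpa using lipschitzWith_one_norm.sub (LipschitzWith.const a)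
  have haffine : LipschitzWith ‖(b - a)⁻¹‖₊ fun x : E => (b - a)⁻¹ * (‖x‖ - a) := by
    simpa only [mul_one, Function.comp_def, smul_eq_mul] using
      (lipschitzWith_smul (b - a)⁻¹).comp hnorm
  exact (haffine.const_min 1).const_max 0

end AnnularRamp

section RadialCutoff

variable {E : Type*} [SeminormedAddCommGroup E] {r c : ℕ → ℝ} {m M : ℕ} {x : E}

/-- The piecewise affine radial function that is `1` on the ball of radius `r m` and drops by `c i`
across the annulus `r i < ‖x‖ < r (i + 1)` for `m ≤ i < M`. -/
def radialCutoff (r c : ℕ → ℝ) (m M : ℕ) (x : E) : ℝ :=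
  1 - ∑ i ∈ Finset.Ico m M, c i * annularRamp (r i) (r (i + 1)) x

lemma exists_lipschitzWith_radialCutoff (r c : ℕ → ℝ) (m M : ℕ) :
    ∃ K, LipschitzWith K (radialCutoff r c m M : E → ℝ) :=
  ⟨_, (LipschitzWith.const 1).sub <| lipschitzWith_finset_sum fun i _ =>
    (lipschitzWith_smul (c i)).comp (lipschitzWith_annularRamp (r i) (r (i + 1)))⟩

lemma radialCutoff_mem_Icc (hc : ∀ i, 0 ≤ c i) (hsum : ∑ i ∈ Finset.Ico m M, c i ≤ 1) (x : E) :
    radialCutoff r c m M x ∈ Icc (0 : ℝ) 1 := by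
  refine ⟨sub_nonneg.2 (le_trans (Finset.sum_le_sum fun i _ => ?_) hsum),
    sub_le_self 1 (Finset.sum_nonneg fun i _ => ?_)⟩
  · exact mul_le_of_le_one_right (hc i) (annularRamp_mem_Icc _ _ x).2
  · exact mul_nonneg (hc i) (annularRamp_mem_Icc _ _ x).1

lemma radialCutoff_of_norm_le (hr : Monotone r) (hx : ‖x‖ ≤ r m) : radialCutoff r c m M x = 1 := by
  rw [radialCutoff, Finset.sum_eq_zero, sub_zero]
  intro i hi
  rw [annularRamp_of_norm_le (hr i.le_succ) (hx.trans (hr (Finset.mem_Ico.1 hi).1)), mul_zero]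

lemma radialCutoff_of_le_norm (hr : StrictMono r) (hsum : ∑ i ∈ Finset.Ico m M, c i = 1)
    (hx : r M ≤ ‖x‖) : radialCutoff r c m M x = 0 := by
  rw [radialCutoff, sub_eq_zero, ← hsum]
  refine Finset.sum_congr rfl fun i hi => ?_
  rw [annularRamp_of_le_norm (hr i.lt_succ_self)
    ((hr.monotone (Finset.mem_Ico.1 hi).2).trans hx), mul_one]

lemma hasCompactSupport_radialCutoff [ProperSpace E] (hr : StrictMono r)
    (hsum : ∑ i ∈ Finset.Ico m M, c i = 1) :
    HasCompactSupport (radialCutoff r c m M : E → ℝ) := by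
  refine HasCompactSupport.intro (isCompact_closedBall 0 (r M)) fun x hx => ?_
  rw [mem_closedBall_zero_iff, not_le] at hx
  exact radialCutoff_of_le_norm hr hsum hx.le

end RadialCutoff

section Energy

variable {E : Type*} [NormedAddCommGroup E] [NormedSpace ℝ E] {a b : ℝ} {r : ℕ → ℝ} {x : E}

lemma norm_fderiv_annularRamp_le (hab : a ≤ b) (x : E) :
    ‖fderiv ℝ (annularRamp a b) x‖ ≤ (b - a)⁻¹ := by
  simpa [abs_of_nonneg (sub_nonneg.2 hab)] using
    norm_fderiv_le_of_lipschitz ℝ (x₀ := x) (lipschitzWith_annularRamp a b)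

-- Outside the open annulus the ramp attains its global minimum `0` or its global maximum `1`.
lemma fderiv_annularRamp_eq_zero (hab : a < b) (hx : ‖x‖ ∉ Ioo a b) :
    fderiv ℝ (annularRamp a b) x = 0 := by
  rcases le_or_gt ‖x‖ a with hxa | hax
  · refine IsLocalMin.fderiv_eq_zero (Eventually.of_forall fun y => ?_)
    rw [annularRamp_of_norm_le hab.le hxa]
    exact (annularRamp_mem_Icc a b y).1
  · have hbx : b ≤ ‖x‖ := not_lt.1 fun hxb => hx ⟨hax, hxb⟩
    refine IsLocalMax.fderiv_eq_zero (Eventually.of_forall fun y => ?_)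
    rw [annularRamp_of_le_norm hab hbx]
    exact (annularRamp_mem_Icc a b y).2

lemma fderiv_radialCutoff (c : ℕ → ℝ) (m M : ℕ)
    (hx : ∀ i, DifferentiableAt ℝ (annularRamp (r i) (r (i + 1))) x) :
    fderiv ℝ (radialCutoff r c m M) x =
      -∑ i ∈ Finset.Ico m M, c i • fderiv ℝ (annularRamp (r i) (r (i + 1))) x := by
  unfold radialCutoff
  rw [fderiv_const_sub, fderiv_fun_sum fun i _ => (hx i).const_mul (c i)]
  simp only [fderiv_const_mul (hx _)]

lemma norm_fderiv_radialCutoff_sq_le (hr : StrictMono r) (c : ℕ → ℝ) (m M : ℕ)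
    (hx : ∀ i, DifferentiableAt ℝ (annularRamp (r i) (r (i + 1))) x) :
    ‖fderiv ℝ (radialCutoff r c m M) x‖ ^ 2 ≤
      ∑ i ∈ Finset.Ico m M,
        (ball (0 : E) (r (i + 1))).indicator (fun _ => (c i / (r (i + 1) - r i)) ^ 2) x := by
  have hzero (i : ℕ) (hi : ‖x‖ ∉ Ioo (r i) (r (i + 1))) :
      c i • fderiv ℝ (annularRamp (r i) (r (i + 1))) x = 0 := by
    rw [fderiv_annularRamp_eq_zero (hr i.lt_succ_self) hi, smul_zero]
  have hdisjoint : (Finset.Ico m M : Set ℕ).Pairwise fun i j =>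
      c i • fderiv ℝ (annularRamp (r i) (r (i + 1))) x = 0 ∨
        c j • fderiv ℝ (annularRamp (r j) (r (j + 1))) x = 0 := by
    intro i _ j _ hij
    by_contra! h
    exact Set.disjoint_left.1 (hr.monotone.pairwise_disjoint_on_Ioo_succ hij)
      (not_not.1 (mt (hzero i) h.1)) (not_not.1 (mt (hzero j) h.2))
  rw [fderiv_radialCutoff c m M hx, norm_neg, norm_sum_sq_of_pairwise_eq_zero hdisjoint]
  refine Finset.sum_le_sum fun i _ => ?_
  by_cases hi : ‖x‖ ∈ Ioo (r i) (r (i + 1))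
  · rw [indicator_of_mem (mem_ball_zero_iff.2 hi.2), norm_smul, mul_pow, div_eq_mul_inv, mul_pow,
      Real.norm_eq_abs, sq_abs]
    gcongr
    exact norm_fderiv_annularRamp_le (hr i.lt_succ_self).le x
  · rw [hzero i hi, norm_zero, zero_pow two_ne_zero]
    exact indicator_nonneg (fun _ _ => sq_nonneg _) x

variable [FiniteDimensional ℝ E] [MeasurableSpace E] [BorelSpace E]
  {μ : Measure E} [μ.IsAddHaarMeasure] {f : E → ℝ}

lemma integral_mul_norm_fderiv_radialCutoff_sq_le (hf₀ : 0 ≤ᵐ[μ] f)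
    (hf : LocallyIntegrable f μ) (hr : StrictMono r) (c : ℕ → ℝ) (m M : ℕ) :
    ∫ x, f x * ‖fderiv ℝ (radialCutoff r c m M) x‖ ^ 2 ∂μ ≤
      ∑ i ∈ Finset.Ico m M,
        (c i / (r (i + 1) - r i)) ^ 2 * ∫ x in ball 0 (r (i + 1)), f x ∂μ := by
  have hint : ∀ i ∈ Finset.Ico m M, Integrable ((ball (0 : E) (r (i + 1))).indicator
      fun x => (c i / (r (i + 1) - r i)) ^ 2 * f x) μ := fun i _ =>
    (integrable_indicator_iff measurableSet_ball).2 <|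
      ((hf.integrableOn_isCompact (isCompact_closedBall 0 _)).mono_set
        ball_subset_closedBall).const_mul _
  have hdiff : ∀ᵐ x ∂μ, ∀ i, DifferentiableAt ℝ (annularRamp (r i) (r (i + 1))) x :=
    ae_all_iff.2 fun i => (lipschitzWith_annularRamp _ _).ae_differentiableAt
  calc ∫ x, f x * ‖fderiv ℝ (radialCutoff r c m M) x‖ ^ 2 ∂μ
      ≤ ∫ x, ∑ i ∈ Finset.Ico m M, (ball (0 : E) (r (i + 1))).indicator
          (fun x => (c i / (r (i + 1) - r i)) ^ 2 * f x) x ∂μ := by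
        refine integral_mono_of_nonneg ?_ (integrable_finsetSum _ hint) ?_
        · filter_upwards [hf₀] with x hfx using mul_nonneg hfx (sq_nonneg _)
        filter_upwards [hf₀, hdiff] with x hfx hx
        refine (mul_le_mul_of_nonneg_left
          (norm_fderiv_radialCutoff_sq_le hr c m M hx) hfx).trans_eq ?_
        rw [mul_comm, Finset.sum_mul]
        simp only [indicator_mul_left]
    _ = ∑ i ∈ Finset.Ico m M,
          (c i / (r (i + 1) - r i)) ^ 2 * ∫ x in ball 0 (r (i + 1)), f x ∂μ := by
        simp only [integral_finsetSum _ hint, integral_indicator measurableSet_ball,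
          integral_const_mul]

lemma integral_mul_norm_fderiv_radialCutoff_seriesWeight_sq_le (hf₀ : 0 ≤ᵐ[μ] f)
    (hf : LocallyIntegrable f μ) (hr : StrictMono r) {a : ℕ → ℝ}
    (ha : ∀ i, ∫ x in ball 0 (r (i + 1)), f x ∂μ ≤ (r (i + 1) - r i) ^ 2 * a i) (m M : ℕ) :
    ∫ x, f x * ‖fderiv ℝ (radialCutoff r (seriesWeight a (Finset.Ico m M)) m M) x‖ ^ 2 ∂μ ≤
      (∑ i ∈ Finset.Ico m M, (a i)⁻¹)⁻¹ := by
  set c := seriesWeight a (Finset.Ico m M)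
  calc ∫ x, f x * ‖fderiv ℝ (radialCutoff r c m M) x‖ ^ 2 ∂μ
      ≤ ∑ i ∈ Finset.Ico m M,
          (c i / (r (i + 1) - r i)) ^ 2 * ∫ x in ball 0 (r (i + 1)), f x ∂μ :=
        integral_mul_norm_fderiv_radialCutoff_sq_le hf₀ hf hr c m M
    _ ≤ ∑ i ∈ Finset.Ico m M, c i ^ 2 * a i := by
        refine Finset.sum_le_sum fun i _ => ?_
        have hwidth : r (i + 1) - r i ≠ 0 := (sub_pos.2 (hr i.lt_succ_self)).ne'
        refine (mul_le_mul_of_nonneg_left (ha i) (sq_nonneg _)).trans_eq ?_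
        rw [← mul_assoc, ← mul_pow, div_mul_cancel₀ _ hwidth]
    _ = (∑ i ∈ Finset.Ico m M, (a i)⁻¹)⁻¹ := sum_seriesWeight_sq_mul a _

lemma exists_cutoff_seq_of_not_summable (hf₀ : 0 ≤ᵐ[μ] f) (hf : LocallyIntegrable f μ)
    (hr : StrictMono r) {a : ℕ → ℝ} (ha₀ : ∀ i, 0 ≤ a i)
    (ha : ∀ i, ∫ x in ball 0 (r (i + 1)), f x ∂μ ≤ (r (i + 1) - r i) ^ 2 * a i)
    (hdiv : ¬ Summable fun i => (a i)⁻¹) :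
    ∃ φ : ℕ → E → ℝ,
      (∀ j, ∃ K, LipschitzWith K (φ j)) ∧
      (∀ j, HasCompactSupport (φ j)) ∧
      (∀ j x, φ j x ∈ Icc (0 : ℝ) 1) ∧
      (∀ j, ∀ x ∈ ball (0 : E) (r j), φ j x = 1) ∧
      Tendsto (fun j => ∫ x, f x * ‖fderiv ℝ (φ j) x‖ ^ 2 ∂μ) atTop (𝓝 0) := by
  choose M hM using fun j : ℕ =>
    exists_le_sum_Ico_of_not_summable (fun i => inv_nonneg.2 (ha₀ i)) hdiv j (j + 1 : ℝ)
  have hsum (j : ℕ) : ∑ i ∈ Finset.Ico j (M j), seriesWeight a (Finset.Ico j (M j)) i = 1 :=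
    sum_seriesWeight ((Nat.cast_add_one_pos j).trans_le (hM j)).ne'
  refine ⟨fun j => radialCutoff r (seriesWeight a (Finset.Ico j (M j))) j (M j),
    fun j => exists_lipschitzWith_radialCutoff _ _ _ _,
    fun j => hasCompactSupport_radialCutoff hr (hsum j),
    fun j => radialCutoff_mem_Icc (seriesWeight_nonneg ha₀ _) (hsum j).le,
    fun j x hx => radialCutoff_of_norm_le hr.monotone (mem_ball_zero_iff.1 hx).le, ?_⟩
  refine squeeze_zero' (.of_forall fun j => integral_nonneg_of_ae ?_) (.of_forall fun j => ?_)
    tendsto_one_div_add_atTop_nhds_zero_nat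
  · filter_upwards [hf₀] with x hfx using mul_nonneg hfx (sq_nonneg _)
  · rw [one_div]
    exact (integral_mul_norm_fderiv_radialCutoff_seriesWeight_sq_le hf₀ hf hr ha j (M j)).trans
      (inv_anti₀ (Nat.cast_add_one_pos j) (hM j))

end Energy

theorem logarithmic_cutoff_trick_general {E : Type*} [NormedAddCommGroup E] [NormedSpace ℝ E]
    [FiniteDimensional ℝ E] [MeasurableSpace E] [BorelSpace E] {μ : Measure E}
    [μ.IsAddHaarMeasure] {f : E → ℝ} (hf₀ : 0 ≤ᵐ[μ] f) (hf : LocallyIntegrable f μ)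
    {R₁ : ℝ} (hR₁ : 0 < R₁) {θ : ℝ → ℝ} (hθpos : ∀ s ∈ Ici R₁, 0 < θ s)
    (hθmono : MonotoneOn θ (Ici R₁))
    (hθdiv : Tendsto (fun T => ∫ s in R₁..T, (s * θ s)⁻¹) atTop atTop)
    (hbound : ∀ R ≥ R₁, ∫ x in ball 0 R, f x ∂μ ≤ R ^ 2 * θ R) :
    ∃ (φ : ℕ → E → ℝ) (Rj : ℕ → ℝ),
      (∀ j, ∃ K, LipschitzWith K (φ j)) ∧
      (∀ j, HasCompactSupport (φ j)) ∧
      (∀ j x, φ j x ∈ Icc (0 : ℝ) 1) ∧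
      Tendsto Rj atTop atTop ∧
      (∀ j, ∀ x ∈ ball (0 : E) (Rj j), φ j x = 1) ∧
      Tendsto (fun j => ∫ x, f x * ‖fderiv ℝ (φ j) x‖ ^ 2 ∂μ) atTop (𝓝 0) := by
  set r : ℕ → ℝ := fun i => 2 ^ i * R₁
  have hr : StrictMono r := (pow_right_strictMono₀ one_lt_two).mul_const hR₁
  have hrR (i : ℕ) : R₁ ≤ r i := le_mul_of_one_le_left hR₁.le (one_le_pow₀ one_le_two)
  have hrtop : Tendsto r atTop atTop :=
    (tendsto_pow_atTop_atTop_of_one_lt one_lt_two).atTop_mul_const hR₁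
  have henergy (i : ℕ) : ∫ x in ball 0 (r (i + 1)), f x ∂μ ≤
      (r (i + 1) - r i) ^ 2 * (4 * θ (r (i + 1))) := by
    refine (hbound _ (hrR (i + 1))).trans_eq ?_
    simp only [r]
    ring
  have hdiv : ¬ Summable fun i => (4 * θ (r (i + 1)))⁻¹ := by
    simp only [mul_inv]
    rw [summable_mul_left_iff (by norm_num), summable_nat_add_iff 1 (f := fun i => (θ (r i))⁻¹)]
    exact not_summable_inv_dyadic_of_tendsto_integral hR₁ hθpos hθmono hθdiv
  obtain ⟨φ, hlip, hsupp, hIcc, hone, hlim⟩ := exists_cutoff_seq_of_not_summable hf₀ hf hr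
    (fun i => mul_nonneg zero_le_four (hθpos _ (hrR (i + 1))).le) henergy hdiv
  exact ⟨φ, r, hlip, hsupp, hIcc, hrtop, hone, hlim⟩

/-- The generalized logarithmic cut-off lemma (Lemma 2.1 of the paper) in `ℝⁿ`. -/
theorem logarithmic_cutoff_trick
    (n : ℕ) (hn : 1 ≤ n)
    (f : EuclideanSpace ℝ (Fin n) → ℝ)
    (hf0 : ∀ x, 0 ≤ f x)
    (hfloc : LocallyIntegrable f volume)
    (R₁ : ℝ) (hR₁ : 0 < R₁)
    (θ : ℝ → ℝ)
    (hθC1 : ContDiffOn ℝ 1 θ (Ici R₁))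
    (hθpos : ∀ s ∈ Ici R₁, 0 < θ s)
    (hθmono : MonotoneOn θ (Ici R₁))
    (hθdiv : Tendsto (fun T => ∫ s in R₁..T, (s * θ s)⁻¹) atTop atTop)
    (hbound : ∀ R ≥ R₁, ∫ x in Metric.ball (0 : EuclideanSpace ℝ (Fin n)) R, f x ≤ R ^ 2 * θ R) :
    ∃ (φ : ℕ → EuclideanSpace ℝ (Fin n) → ℝ) (Rj : ℕ → ℝ),
      (∀ j, ∃ K, LipschitzWith K (φ j)) ∧
      (∀ j, HasCompactSupport (φ j)) ∧
      (∀ j x, φ j x ∈ Icc (0 : ℝ) 1) ∧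
      Tendsto Rj atTop atTop ∧
      (∀ j, ∀ x ∈ Metric.ball (0 : EuclideanSpace ℝ (Fin n)) (Rj j), φ j x = 1) ∧
      Tendsto (fun j => ∫ x, f x * ‖gradient (φ j) x‖ ^ 2) atTop (nhds 0) := by
  have hnorm (φ : EuclideanSpace ℝ (Fin n) → ℝ) (x : EuclideanSpace ℝ (Fin n)) :
      ‖gradient φ x‖ = ‖fderiv ℝ φ x‖ := by simp [gradient]
  simpa only [hnorm] using logarithmic_cutoff_trick_general (ae_of_all volume hf0) hfloc hR₁ hθpos
    hθmono hθdiv hbound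
end
end

section
/- Let (X, μ) be a measure space, let g : X → [0,∞) and ρ : X → [0,∞) be measurable, and let V : (0,∞) → [0,∞) be continuous with ∫_{{ρ ≤ R}} g dμ ≤ V(R) for every R > 0. Then for every R ≥ 1, ∫_{{√R ≤ ρ ≤ R}} (g/ρ²) dμ ≤ 2·( V(R)/R² + ∫_{√R}^{R} V(σ)·σ^{−3} dσ ). -/
open MeasureTheory Set Metric Filter
open scoped RealInnerProductSpace Topology ENNReal

noncomputable section

/-! For `0 < ρ ≤ R` one has `1 / ρ ^ n = 1 / R ^ n + ∫ σ in ρ..R, n / σ ^ (n + 1)`. Integrate this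
against `g dμ` over the annulus `{r ≤ ρ ≤ R}` and exchange the order of integration: the first term
becomes the mass of `g` on the annulus divided by `R ^ n`, and in the second one `n / σ ^ (n + 1)`
gets multiplied by the mass of `g` on `{r ≤ ρ ≤ σ}`. Both masses are controlled by `V`. Although
`μ` is arbitrary, Tonelli's theorem applies, because `g dμ` is finite on the annulus. -/

section Tonelli

variable {X α : Type*} [MeasurableSpace X] [MeasurableSpace α] [TopologicalSpace α]
  [SecondCountableTopology α] [LinearOrder α] {κ : Measure α} [SFinite κ] {ρ : X → α}
  {v : α → ℝ≥0∞}

theorem lintegral_setLIntegral_Ici [OrderClosedTopology α] [OpensMeasurableSpace α]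
    {ν : Measure X} [SFinite ν] (hρ : AEMeasurable ρ ν) (hv : AEMeasurable v κ) :
    ∫⁻ x, ∫⁻ σ in Ici (ρ x), v σ ∂κ ∂ν = ∫⁻ σ, v σ * ν {x | ρ x ≤ σ} ∂κ := by
  have hmeas : AEMeasurable ({p : X × α | ρ p.1 ≤ p.2}.indicator fun p => v p.2)
      (ν.prod κ) :=
    hv.comp_snd.indicator₀ (nullMeasurableSet_le hρ.comp_fst measurable_snd.aemeasurable)
  calc ∫⁻ x, ∫⁻ σ in Ici (ρ x), v σ ∂κ ∂ν
      = ∫⁻ x, ∫⁻ σ, {p : X × α | ρ p.1 ≤ p.2}.indicator (fun p => v p.2) (x, σ) ∂κ ∂ν :=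
        lintegral_congr fun x => (lintegral_indicator measurableSet_Ici v).symm
    _ = ∫⁻ σ, ∫⁻ x, {x | ρ x ≤ σ}.indicator (fun _ => v σ) x ∂ν ∂κ :=
        lintegral_lintegral_swap hmeas
    _ = ∫⁻ σ, v σ * ν {x | ρ x ≤ σ} ∂κ :=
        lintegral_congr fun σ => lintegral_indicator_const₀ (hρ.nullMeasurable measurableSet_Iic) _

variable [OrderTopology α] [BorelSpace α] {μ : Measure X} {g : X → ℝ≥0∞}

theorem lintegral_mul_setLIntegral_Ici (hg : AEMeasurable g μ) (hg_fin : ∫⁻ x, g x ∂μ ≠ ∞)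
    (hρ : AEMeasurable ρ μ) (hv : AEMeasurable v κ) :
    ∫⁻ x, g x * ∫⁻ σ in Ici (ρ x), v σ ∂κ ∂μ
      = ∫⁻ σ, v σ * ∫⁻ x in {x | ρ x ≤ σ}, g x ∂μ ∂κ := by
  have : IsFiniteMeasure (μ.withDensity g) := isFiniteMeasure_withDensity hg_fin
  have hρ' : AEMeasurable ρ (μ.withDensity g) := hρ.mono_ac (withDensity_absolutelyContinuous μ g)
  have htail : Antitone fun t => ∫⁻ σ in Ici t, v σ ∂κ := fun _ _ hst =>
    lintegral_mono_set (Ici_subset_Ici.2 hst)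
  calc ∫⁻ x, g x * ∫⁻ σ in Ici (ρ x), v σ ∂κ ∂μ
      = ∫⁻ x, ∫⁻ σ in Ici (ρ x), v σ ∂κ ∂μ.withDensity g :=
        (lintegral_withDensity_eq_lintegral_mul₀' hg
          (htail.measurable.comp_aemeasurable hρ')).symm
    _ = ∫⁻ σ, v σ * μ.withDensity g {x | ρ x ≤ σ} ∂κ := lintegral_setLIntegral_Ici hρ' hv
    _ = ∫⁻ σ, v σ * ∫⁻ x in {x | ρ x ≤ σ}, g x ∂μ ∂κ :=
        lintegral_congr fun σ => by
          rw [withDensity_apply₀ (s := {x | ρ x ≤ σ}) g (hρ.nullMeasurable measurableSet_Iic)]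

theorem setLIntegral_annulus_mul_comp_le {V w : α → ℝ≥0∞} {r R : α}
    (hg : AEMeasurable g μ) (hρ : AEMeasurable ρ μ) (hrR : r ≤ R)
    (hv : AEMeasurable v (κ.restrict (Icc r R)))
    (hw : ∀ t ∈ Icc r R, w t = w R + ∫⁻ σ in Icc t R, v σ ∂κ)
    (hVR : V R ≠ ∞) (hV : ∀ σ ∈ Icc r R, ∫⁻ x in {x | ρ x ≤ σ}, g x ∂μ ≤ V σ) :
    ∫⁻ x in {x | r ≤ ρ x ∧ ρ x ≤ R}, g x * w (ρ x) ∂μ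
      ≤ w R * V R + ∫⁻ σ in Icc r R, v σ * V σ ∂κ := by
  set A : Set X := {x | r ≤ ρ x ∧ ρ x ≤ R}
  have hA : NullMeasurableSet A μ := hρ.nullMeasurable measurableSet_Icc
  have hgA : ∫⁻ x in A, g x ∂μ ≤ V R :=
    (lintegral_mono_set fun _ hx => hx.2).trans (hV R (right_mem_Icc.2 hrR))
  have hgAσ : ∀ σ ∈ Icc r R, ∫⁻ x in {x | ρ x ≤ σ}, g x ∂μ.restrict A ≤ V σ := fun σ hσ =>
    (lintegral_mono' (Measure.restrict_mono_measure Measure.restrict_le_self _) le_rfl).trans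
      (hV σ hσ)
  have hwA : ∀ x ∈ A, w (ρ x) = w R + ∫⁻ σ in Ici (ρ x), v σ ∂κ.restrict (Icc r R) := fun x hx => by
    have hIcc : Ici (ρ x) ∩ Icc r R = Icc (ρ x) R := by
      rw [← Ici_inter_Iic, ← inter_assoc, Ici_inter_Ici, sup_eq_left.2 hx.1, Ici_inter_Iic]
    rw [hw (ρ x) hx, Measure.restrict_restrict measurableSet_Ici, hIcc]
  calc ∫⁻ x in A, g x * w (ρ x) ∂μ
      = ∫⁻ x in A, w R * g x + g x * ∫⁻ σ in Ici (ρ x), v σ ∂κ.restrict (Icc r R) ∂μ := by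
        refine lintegral_congr_ae ((ae_restrict_mem₀ hA).mono fun x hx => ?_)
        simp only [hwA x hx, mul_add, mul_comm (g x) (w R)]
    _ = w R * ∫⁻ x in A, g x ∂μ
          + ∫⁻ σ in Icc r R, v σ * ∫⁻ x in {x | ρ x ≤ σ}, g x ∂μ.restrict A ∂κ := by
        rw [lintegral_add_left' (hg.restrict.const_mul _), lintegral_const_mul'' _ hg.restrict,
          lintegral_mul_setLIntegral_Ici hg.restrict (ne_top_of_le_ne_top hVR hgA) hρ.restrict hv]
    _ ≤ w R * V R + ∫⁻ σ in Icc r R, v σ * V σ ∂κ :=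
        add_le_add (mul_le_mul_right hgA _) (setLIntegral_mono' measurableSet_Icc fun σ hσ =>
          mul_le_mul_right (hgAσ σ hσ) _)

end Tonelli

theorem ofReal_intervalIntegral_eq_setLIntegral_Icc {μ : Measure ℝ} [NullSingletonClass μ]
    {f : ℝ → ℝ} {a b : ℝ} (hab : a ≤ b) (hf : IntervalIntegrable f μ a b)
    (hf0 : ∀ σ ∈ Icc a b, 0 ≤ f σ) :
    ENNReal.ofReal (∫ σ in a..b, f σ ∂μ) = ∫⁻ σ in Icc a b, ENNReal.ofReal (f σ) ∂μ := by
  rw [intervalIntegral.integral_of_le hab, ← integral_Icc_eq_integral_Ioc]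
  exact ofReal_integral_eq_lintegral_ofReal
    ((intervalIntegrable_iff_integrableOn_Icc_of_le hab).1 hf)
    (ae_restrict_of_forall_mem measurableSet_Icc hf0)

theorem intervalIntegrable_div_pow {μ : Measure ℝ} [IsLocallyFiniteMeasure μ] {f : ℝ → ℝ}
    {a b : ℝ} (n : ℕ) (hf : ContinuousOn f (Icc a b)) (ha : 0 < a) (hab : a ≤ b) :
    IntervalIntegrable (fun σ => f σ / σ ^ n) μ a b :=
  (hf.div (by fun_prop) fun _ hσ =>
    pow_ne_zero n (ha.trans_le hσ.1).ne').intervalIntegrable_of_Icc hab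

theorem hasDerivAt_neg_one_div_pow {𝕜 : Type*} [NontriviallyNormedField 𝕜] (n : ℕ) {x : 𝕜}
    (hx : x ≠ 0) : HasDerivAt (fun y => -(1 / y ^ n)) (n / x ^ (n + 1)) x := by
  have hzpow : (fun y : 𝕜 => -(1 / y ^ n)) = fun y => -y ^ (-n : ℤ) := by
    simp only [one_div, zpow_neg, zpow_natCast]
  have hexp : (-n : ℤ) - 1 = -((n + 1 : ℕ) : ℤ) := by
    push_cast
    ring
  rw [hzpow]
  refine (hasDerivAt_zpow (-n : ℤ) x (.inl hx)).fun_neg.congr_deriv ?_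
  rw [hexp, zpow_neg, zpow_natCast, Int.cast_neg, Int.cast_natCast, neg_mul, neg_neg,
    div_eq_mul_inv]

theorem ofReal_one_div_pow_eq_add_setLIntegral (n : ℕ) {t R : ℝ} (ht : 0 < t) (htR : t ≤ R) :
    ENNReal.ofReal (1 / t ^ n)
      = ENNReal.ofReal (1 / R ^ n) + ∫⁻ σ in Icc t R, ENNReal.ofReal (n / σ ^ (n + 1)) := by
  have hpos : ∀ σ ∈ Icc t R, 0 < σ := fun σ hσ => ht.trans_le hσ.1
  have hnonneg : ∀ σ ∈ Icc t R, (0 : ℝ) ≤ n / σ ^ (n + 1) := fun σ hσ =>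
    div_nonneg n.cast_nonneg (pow_pos (hpos σ hσ) _).le
  have hint : IntervalIntegrable (fun σ : ℝ => n / σ ^ (n + 1)) volume t R :=
    intervalIntegrable_div_pow _ continuousOn_const ht htR
  have hftc : ∫ σ in t..R, (n : ℝ) / σ ^ (n + 1) = -(1 / R ^ n) - -(1 / t ^ n) :=
    intervalIntegral.integral_eq_sub_of_hasDerivAt
      (fun σ hσ => hasDerivAt_neg_one_div_pow n (hpos σ (uIcc_of_le htR ▸ hσ)).ne') hint
  have hR : 0 ≤ 1 / R ^ n := one_div_nonneg.2 (pow_pos (ht.trans_le htR) n).le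
  rw [← ofReal_intervalIntegral_eq_setLIntegral_Icc htR hint hnonneg,
    ← ENNReal.ofReal_add hR (intervalIntegral.integral_nonneg htR hnonneg), hftc]
  congr 1
  ring

theorem annulus_estimate_general {X : Type*} [MeasurableSpace X] {μ : Measure X} {g ρ : X → ℝ}
    {V : ℝ → ℝ} {r R : ℝ} (n : ℕ) (hg : AEMeasurable g μ) (hρ : AEMeasurable ρ μ) (hg0 : 0 ≤ᵐ[μ] g)
    (hr : 0 < r) (hrR : r ≤ R)
    (hVi : IntervalIntegrable (fun σ => V σ / σ ^ (n + 1)) volume r R)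
    (hV0 : ∀ σ ∈ Icc r R, 0 ≤ V σ)
    (hV : ∀ σ ∈ Icc r R,
      ∫⁻ x in {x | ρ x ≤ σ}, ENNReal.ofReal (g x) ∂μ ≤ ENNReal.ofReal (V σ)) :
    ∫⁻ x in {x | r ≤ ρ x ∧ ρ x ≤ R}, ENNReal.ofReal (g x / ρ x ^ n) ∂μ
      ≤ ENNReal.ofReal (V R / R ^ n + n * ∫ σ in r..R, V σ / σ ^ (n + 1)) := by
  have hpos : ∀ σ ∈ Icc r R, 0 < σ := fun σ hσ => hr.trans_le hσ.1
  have hVR : 0 ≤ V R := hV0 R (right_mem_Icc.2 hrR)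
  have hVRn : 0 ≤ V R / R ^ n :=
    div_nonneg hVR (pow_pos (hr.trans_le hrR) n).le
  have hVn : ∀ σ ∈ Icc r R, 0 ≤ n * (V σ / σ ^ (n + 1)) := fun σ hσ =>
    mul_nonneg n.cast_nonneg (div_nonneg (hV0 σ hσ) (pow_pos (hpos σ hσ) _).le)
  calc ∫⁻ x in {x | r ≤ ρ x ∧ ρ x ≤ R}, ENNReal.ofReal (g x / ρ x ^ n) ∂μ
      = ∫⁻ x in {x | r ≤ ρ x ∧ ρ x ≤ R},
          ENNReal.ofReal (g x) * ENNReal.ofReal (1 / ρ x ^ n) ∂μ := by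
        refine lintegral_congr_ae ?_
        filter_upwards [ae_restrict_of_ae hg0] with x hgx
        rw [← ENNReal.ofReal_mul hgx, mul_one_div]
    _ ≤ ENNReal.ofReal (1 / R ^ n) * ENNReal.ofReal (V R)
          + ∫⁻ σ in Icc r R, ENNReal.ofReal (n / σ ^ (n + 1)) * ENNReal.ofReal (V σ) :=
        setLIntegral_annulus_mul_comp_le (v := fun σ => ENNReal.ofReal (n / σ ^ (n + 1)))
          (w := fun σ => ENNReal.ofReal (1 / σ ^ n)) (V := fun σ => ENNReal.ofReal (V σ))
          hg.ennreal_ofReal hρ hrR (by fun_prop)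
          (fun t ht => ofReal_one_div_pow_eq_add_setLIntegral n (hpos t ht) ht.2)
          ENNReal.ofReal_ne_top hV
    _ = ENNReal.ofReal (V R / R ^ n)
          + ∫⁻ σ in Icc r R, ENNReal.ofReal (n * (V σ / σ ^ (n + 1))) := by
        rw [← ENNReal.ofReal_mul' hVR, one_div_mul_eq_div]
        congr 1
        refine setLIntegral_congr_fun measurableSet_Icc fun σ hσ => ?_
        rw [← ENNReal.ofReal_mul' (hV0 σ hσ), div_mul_eq_mul_div, mul_div_assoc]
    _ = ENNReal.ofReal (V R / R ^ n + n * ∫ σ in r..R, V σ / σ ^ (n + 1)) := by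
        rw [← ofReal_intervalIntegral_eq_setLIntegral_Icc hrR (hVi.const_mul _) hVn,
          ← ENNReal.ofReal_add hVRn (intervalIntegral.integral_nonneg hrR hVn),
          intervalIntegral.integral_const_mul]

/-- The abstract annulus estimate (Proposition 2.6 of the paper). -/
theorem annulus_estimate
    {X : Type*} [MeasurableSpace X] (μ : Measure X)
    (g ρ : X → ℝ) (hg : Measurable g) (hρ : Measurable ρ)
    (hg0 : ∀ x, 0 ≤ g x) (hρ0 : ∀ x, 0 ≤ ρ x)
    (V : ℝ → ℝ) (hVc : ContinuousOn V (Ioi 0)) (hV0 : ∀ R > (0 : ℝ), 0 ≤ V R)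
    (hbound : ∀ R > (0 : ℝ),
      ∫⁻ x in {x | ρ x ≤ R}, ENNReal.ofReal (g x) ∂μ ≤ ENNReal.ofReal (V R)) :
    ∀ R ≥ (1 : ℝ),
      ∫⁻ x in {x | Real.sqrt R ≤ ρ x ∧ ρ x ≤ R}, ENNReal.ofReal (g x / ρ x ^ 2) ∂μ
        ≤ ENNReal.ofReal (2 * (V R / R ^ 2 + ∫ σ in Real.sqrt R..R, V σ / σ ^ 3)) := by
  intro R hR
  have hR0 : 0 < R := one_pos.trans_le hR
  have hr : 0 < √R := Real.sqrt_pos.2 hR0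
  have hrR : √R ≤ R := Real.sqrt_le_self_iff.2 (.inr hR)
  have hpos : ∀ σ ∈ Icc (√R) R, 0 < σ := fun σ hσ => hr.trans_le hσ.1
  refine (annulus_estimate_general 2 hg.aemeasurable hρ.aemeasurable (.of_forall hg0) hr hrR
    (intervalIntegrable_div_pow 3 (hVc.mono hpos) hr hrR) (fun σ hσ => hV0 σ (hpos σ hσ))
    fun σ hσ => hbound σ (hpos σ hσ)).trans (ENNReal.ofReal_le_ofReal ?_)
  have hVR : 0 ≤ V R / R ^ 2 := div_nonneg (hV0 R hR0) (sq_nonneg R)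
  push_cast
  linarith
end
end

section
/- Let Ω ⊆ ℝⁿ be open, let a ∈ C¹([0,∞)) satisfy a(t) > 0 and (t·a(t))′ > 0 for all t ≥ 0, and assume a is of mean curvature type: there exist constants C₁, C₂ > 0 with t²·λ₁(t) ≤ C₁·λ₂(t) ≤ C₂/t for all t > 0. Let f : ℝ → ℝ be continuous and let u ∈ C¹(Ω) be a weak solution of Δ_a u + f(u) = 0 in Ω with sup_Ω |∇u| < ∞ and |Ω ∩ B_R| = o(R² log R) as R → ∞. Then u has moderate energy growth in Ω. -/
open MeasureTheory Set Metric Filter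
open scoped RealInnerProductSpace Topology ENNReal

noncomputable section

variable {n : ℕ}

/-- The quasilinear operator matrix `A(p)` applied to a vector `v`:
`A(p)v = a(|p|) v + (a'(|p|)/|p|) ⟨p,v⟩ p` (with the second term vanishing at `p = 0`). -/
def Aop (a : ℝ → ℝ) (p v : EuclideanSpace ℝ (Fin n)) : EuclideanSpace ℝ (Fin n) :=
  a ‖p‖ • v + ((deriv a ‖p‖ / ‖p‖) * ⟪p, v⟫) • p

/-- `λ₁(t) = a(t) + t·a'(t) = (t a(t))'`. -/
def lam1 (a : ℝ → ℝ) (t : ℝ) : ℝ := a t + t * deriv a t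

/-- `λ₂(t) = a(t)`. -/
def lam2 (a : ℝ → ℝ) (t : ℝ) : ℝ := a t

/-- `λmax(t) = max{λ₁(t), λ₂(t)}`. -/
def lamMax (a : ℝ → ℝ) (t : ℝ) : ℝ := max (lam1 a t) (lam2 a t)

/-- A Lipschitz test function with compact support contained in `Ω`. -/
def IsTestOn (Ω : Set (EuclideanSpace ℝ (Fin n))) (φ : EuclideanSpace ℝ (Fin n) → ℝ) : Prop :=
  (∃ K, LipschitzWith K φ) ∧ HasCompactSupport φ ∧ tsupport φ ⊆ Ω

/-- `u` is a weak solution of `div(a(|∇u|)∇u) + f(u) = 0` in `Ω`. -/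
def IsWeakSolution (a f : ℝ → ℝ) (Ω : Set (EuclideanSpace ℝ (Fin n)))
    (u : EuclideanSpace ℝ (Fin n) → ℝ) : Prop :=
  ∀ φ : EuclideanSpace ℝ (Fin n) → ℝ, IsTestOn Ω φ →
    ∫ x in Ω, a ‖gradient u x‖ * ⟪gradient u x, gradient φ x⟫
      = ∫ x in Ω, f (u x) * φ x

/-- The stability inequality for a solution `u`. -/
def IsStable (a f : ℝ → ℝ) (Ω : Set (EuclideanSpace ℝ (Fin n)))
    (u : EuclideanSpace ℝ (Fin n) → ℝ) : Prop :=
  ∀ φ : EuclideanSpace ℝ (Fin n) → ℝ, IsTestOn Ω φ →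
    ∫ x in Ω, deriv f (u x) * φ x ^ 2
      ≤ ∫ x in Ω, ⟪Aop a (gradient u x) (gradient φ x), gradient φ x⟫

/-- `u` has moderate energy growth in `Ω₀`. -/
def ModerateEnergyGrowth (a : ℝ → ℝ) (u : EuclideanSpace ℝ (Fin n) → ℝ)
    (Ω₀ : Set (EuclideanSpace ℝ (Fin n))) : Prop :=
  ∃ φ : ℕ → EuclideanSpace ℝ (Fin n) → ℝ,
    (∀ j, ∃ K, LipschitzWith K (φ j)) ∧
    (∀ j, HasCompactSupport (φ j)) ∧
    (∀ j x, 0 ≤ φ j x) ∧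
    (∀ K : Set (EuclideanSpace ℝ (Fin n)), IsCompact K → K ⊆ closure Ω₀ →
      TendstoUniformlyOn (fun j => φ j) (fun _ => (1 : ℝ)) atTop K) ∧
    Tendsto (fun j => ∫ x in Ω₀, ‖gradient u x‖ ^ 2 *
        ⟪Aop a (gradient u x) (gradient (φ j) x), gradient (φ j) x⟫)
      atTop (nhds 0)

/-- A `C^k` domain: nonempty, open, connected, with boundary locally given by a regular
`C^k` defining function. -/
def IsCkDomain (k : ℕ∞) (Ω : Set (EuclideanSpace ℝ (Fin n))) : Prop :=
  Ω.Nonempty ∧ IsOpen Ω ∧ IsConnected Ω ∧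
    ∀ p ∈ frontier Ω, ∃ V : Set (EuclideanSpace ℝ (Fin n)),
      ∃ g : EuclideanSpace ℝ (Fin n) → ℝ,
        IsOpen V ∧ p ∈ V ∧ ContDiffOn ℝ k g V ∧ (∀ x ∈ V, gradient g x ≠ 0) ∧
        Ω ∩ V = {x ∈ V | g x < 0}

/-- A `C^k` domain together with its interior unit normal field `η`. -/
def IsCkDomainWithNormal (k : ℕ∞) (Ω : Set (EuclideanSpace ℝ (Fin n)))
    (η : EuclideanSpace ℝ (Fin n) → EuclideanSpace ℝ (Fin n)) : Prop :=
  Ω.Nonempty ∧ IsOpen Ω ∧ IsConnected Ω ∧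
    ∀ p ∈ frontier Ω, ∃ V : Set (EuclideanSpace ℝ (Fin n)),
      ∃ g : EuclideanSpace ℝ (Fin n) → ℝ,
        IsOpen V ∧ p ∈ V ∧ ContDiffOn ℝ k g V ∧ (∀ x ∈ V, gradient g x ≠ 0) ∧
        Ω ∩ V = {x ∈ V | g x < 0} ∧
        η p = -(‖gradient g p‖⁻¹ • gradient g p)

/-- `a ∈ C^{1,1}_loc([0,∞))`: `C¹` on `[0,∞)` with locally Lipschitz derivative. -/
def C11Loc (a : ℝ → ℝ) : Prop :=
  ContDiffOn ℝ 1 a (Ici 0) ∧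
    ∀ t ∈ Ici (0 : ℝ), ∃ V ∈ 𝓝[Ici (0 : ℝ)] t, ∃ K, LipschitzOnWith K (deriv a) V

/-!
For bounded gradients, `|p|² ⟨A(p)v, v⟩` is at most a constant times `|v|²`, so the energy in the
definition of moderate energy growth is controlled by the Dirichlet energy of the cutoffs. Take the
logarithmic cutoff `φ` that is `1` on `B_{e^m}` and `0` outside `B_{e^{2m}}`, so that
`|∇φ(x)| ≤ 1 / (m|x|)`. If `|Ω ∩ B_R| ≤ ε R² log R`, then each of the `m` shells
`e^i ≤ |x| < e^{i+1}`, `m ≤ i < 2m`, contributes at most `(m e^i)⁻² |Ω ∩ B_{e^{i+1}}| ≤ 2e²ε / m`,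
and the Dirichlet energy of `φ` is at most `2e²ε`.
-/

open scoped NNReal Gradient

section LipschitzGradient

variable {F : Type*} [NormedAddCommGroup F] [InnerProductSpace ℝ F] [CompleteSpace F]

lemma norm_gradient_eq_norm_fderiv (u : F → ℝ) (x : F) : ‖∇ u x‖ = ‖fderiv ℝ u x‖ := by
  rw [← toDual_gradient, LinearIsometryEquiv.norm_map]

lemma exists_mem_nhds_lipschitzOnWith_of_norm_gradient_le {u : F → ℝ} {s : Set F} {K : ℝ≥0}
    (hs : IsOpen s) (hu : DifferentiableOn ℝ u s) (hK : ∀ x ∈ s, ‖∇ u x‖ ≤ K) :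
    ∀ x ∈ s, ∃ t ∈ 𝓝 x, LipschitzOnWith K u t := by
  intro x hx
  obtain ⟨r, hr, hball⟩ := Metric.isOpen_iff.mp hs x hx
  refine ⟨ball x r, ball_mem_nhds x hr, (convex_ball x r).lipschitzOnWith_of_nnnorm_fderiv_le
    (fun y hy ↦ hu.differentiableAt (hs.mem_nhds (hball hy))) fun y hy ↦ ?_⟩
  rw [← NNReal.coe_le_coe, coe_nnnorm, ← norm_gradient_eq_norm_fderiv]
  exact hK y (hball hy)

lemma norm_gradient_le_of_lipschitzOnWith {u : F → ℝ} {x : F} {t : Set F} {K : ℝ≥0}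
    (ht : t ∈ 𝓝 x) (hu : LipschitzOnWith K u t) : ‖∇ u x‖ ≤ K :=
  (norm_gradient_eq_norm_fderiv u x).trans_le (norm_fderiv_le_of_lipschitzOn ℝ ht hu)

end LipschitzGradient

lemma lipschitzOnWith_log_Ici {ρ : ℝ≥0} (hρ : 0 < ρ) :
    LipschitzOnWith ρ⁻¹ Real.log (Ici (ρ : ℝ)) := by
  have hpos : ∀ s ∈ Ici (ρ : ℝ), 0 < s := fun s hs ↦ (NNReal.coe_pos.mpr hρ).trans_le hs
  refine (convex_Ici _).lipschitzOnWith_of_nnnorm_deriv_le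
    (fun s hs ↦ Real.differentiableAt_log (hpos s hs).ne') fun s hs ↦ ?_
  rw [← NNReal.coe_le_coe, coe_nnnorm, Real.deriv_log, norm_inv, Real.norm_of_nonneg (hpos s hs).le,
    NNReal.coe_inv]
  exact inv_anti₀ (NNReal.coe_pos.mpr hρ) hs

lemma exists_mem_Ico_exp_le_lt_exp {k l : ℕ} {r : ℝ} (hk : Real.exp k ≤ r)
    (hl : r < Real.exp l) : ∃ i ∈ Finset.Ico k l, Real.exp i ≤ r ∧ r < Real.exp (i + 1) := by
  have hr : 0 < r := (Real.exp_pos _).trans_le hk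
  have hklog : (k : ℝ) ≤ Real.log r := (Real.le_log_iff_exp_le hr).mpr hk
  have hlog : 0 ≤ Real.log r := k.cast_nonneg.trans hklog
  exact ⟨⌊Real.log r⌋₊,
    Finset.mem_Ico.mpr
      ⟨Nat.le_floor hklog, (Nat.floor_lt hlog).mpr ((Real.log_lt_iff_lt_exp hr).mpr hl)⟩,
    (Real.le_log_iff_exp_le hr).mp (Nat.floor_le hlog),
    (Real.log_lt_iff_lt_exp hr).mp (Nat.lt_floor_add_one _)⟩

lemma sum_Ico_inv_mul_exp_sq_mul_le {V : ℕ → ℝ} {ε : ℝ} {m : ℕ} (hm : 0 < m) (hε : 0 ≤ ε)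
    (hV : ∀ i ≥ m, V i ≤ ε * (Real.exp (i + 1) ^ 2 * (i + 1))) :
    ∑ i ∈ Finset.Ico m (2 * m), ((m * Real.exp i)⁻¹) ^ 2 * V i ≤
      2 * Real.exp 1 ^ 2 * ε := by
  have hm' : (0 : ℝ) < m := Nat.cast_pos.mpr hm
  have hterm : ∀ i ∈ Finset.Ico m (2 * m),
      ((m * Real.exp i)⁻¹) ^ 2 * V i ≤ 2 * Real.exp 1 ^ 2 * ε / m := by
    intro i hi
    obtain ⟨hmi, him⟩ := Finset.mem_Ico.mp hi
    have him' : (i + 1 : ℝ) ≤ 2 * m := by exact_mod_cast him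
    calc ((m * Real.exp i)⁻¹) ^ 2 * V i
        ≤ ((m * Real.exp i)⁻¹) ^ 2 * (ε * (Real.exp (i + 1) ^ 2 * (i + 1))) := by
          gcongr
          exact hV i hmi
      _ = Real.exp 1 ^ 2 * ε / m ^ 2 * (i + 1) := by
          rw [Real.exp_add]
          field_simp
      _ ≤ Real.exp 1 ^ 2 * ε / m ^ 2 * (2 * m) := by gcongr
      _ = 2 * Real.exp 1 ^ 2 * ε / m := by field_simp
  calc ∑ i ∈ Finset.Ico m (2 * m), ((m * Real.exp i)⁻¹) ^ 2 * V i
      ≤ (Finset.Ico m (2 * m)).card • (2 * Real.exp 1 ^ 2 * ε / m) :=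
        Finset.sum_le_card_nsmul _ _ _ hterm
    _ = 2 * Real.exp 1 ^ 2 * ε := by
        rw [Nat.card_Ico, two_mul, Nat.add_sub_cancel, nsmul_eq_mul, mul_div_cancel₀ _ hm'.ne']

lemma integrable_indicator_ball_const {α : Type*} [PseudoMetricSpace α] [ProperSpace α]
    [MeasurableSpace α] [OpensMeasurableSpace α] (μ : Measure α) [IsFiniteMeasureOnCompacts μ]
    (x : α) (r c : ℝ) : Integrable ((ball x r).indicator fun _ ↦ c) μ :=
  (integrable_indicator_iff measurableSet_ball).mpr (integrableOn_const measure_ball_ne_top)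

section LogCutoff

/-- The logarithmic cutoff function: it is `1` for `‖x‖ ≤ exp L`, decreases linearly in `log ‖x‖`,
and vanishes for `exp (2 * L) ≤ ‖x‖`. Truncating the norm below by `1` keeps the logarithm Lipschitz
and does not change the function if `0 < L`; for `L = 0` the division makes it constantly `1`. -/
def logCutoff {E : Type*} [Norm E] (L : ℝ≥0) (x : E) : ℝ :=
  max 0 (min 1 (2 - Real.log (max 1 ‖x‖) / L))

section SeminormedAddCommGroup

variable {E : Type*} [SeminormedAddCommGroup E] {L : ℝ≥0} {x : E}

lemma logCutoff_nonneg (L : ℝ≥0) (x : E) : 0 ≤ logCutoff L x := le_max_left _ _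

lemma logCutoff_le_one (L : ℝ≥0) (x : E) : logCutoff L x ≤ 1 :=
  max_le zero_le_one (min_le_left _ _)

lemma logCutoff_eq_one (hx : ‖x‖ ≤ Real.exp L) : logCutoff L x = 1 := by
  have hlog : Real.log (max 1 ‖x‖) ≤ L :=
    (Real.log_le_iff_le_exp (by positivity)).mpr (max_le (Real.one_le_exp L.coe_nonneg) hx)
  have hdiv : Real.log (max 1 ‖x‖) / L ≤ 1 := div_le_one_of_le₀ hlog L.coe_nonneg
  rw [logCutoff, min_eq_left (by linarith), max_eq_right zero_le_one]

lemma logCutoff_eq_zero (hL : 0 < L) (hx : Real.exp (2 * L) ≤ ‖x‖) : logCutoff L x = 0 := by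
  have hlog : 2 * L ≤ Real.log (max 1 ‖x‖) :=
    (Real.le_log_iff_exp_le (by positivity)).mpr (hx.trans (le_max_right _ _))
  have hdiv : 2 ≤ Real.log (max 1 ‖x‖) / L := (le_div_iff₀ (NNReal.coe_pos.mpr hL)).mpr hlog
  exact max_eq_left ((min_le_right _ _).trans (by linarith))

lemma lipschitzOnWith_logCutoff (L : ℝ≥0) {ρ : ℝ≥0} (hρ : 0 < ρ) :
    LipschitzOnWith (L⁻¹ * ρ⁻¹) (logCutoff L : E → ℝ) {x | ρ ≤ max 1 ‖x‖} := by
  have hclamp : LipschitzWith L⁻¹ fun s : ℝ ↦ max 0 (min 1 (2 - s / L)) := by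
    refine ((LipschitzWith.of_dist_le_mul fun s t ↦ le_of_eq ?_).const_min 1).const_max 0
    rw [dist_sub_left, Real.dist_eq, Real.dist_eq, ← sub_div, abs_div, NNReal.abs_eq,
      NNReal.coe_inv, div_eq_inv_mul]
  have hnorm : LipschitzWith 1 fun x : E ↦ max 1 ‖x‖ := lipschitzWith_one_norm.const_max 1
  have hlog := (lipschitzOnWith_log_Ici hρ).comp
    (s := {x : E | ρ ≤ max 1 ‖x‖}) hnorm.lipschitzOnWith fun _ hx ↦ hx
  rw [mul_one] at hlog
  exact hclamp.comp_lipschitzOnWith hlog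

lemma lipschitzWith_logCutoff (L : ℝ≥0) : LipschitzWith L⁻¹ (logCutoff L : E → ℝ) := by
  have h := lipschitzOnWith_logCutoff (E := E) L one_pos
  simpa [lipschitzOnWith_univ] using h

lemma hasCompactSupport_logCutoff [ProperSpace E] (hL : 0 < L) :
    HasCompactSupport (logCutoff L : E → ℝ) := by
  refine HasCompactSupport.intro (isCompact_closedBall 0 (Real.exp (2 * L))) fun x hx ↦ ?_
  rw [mem_closedBall_zero_iff, not_le] at hx
  exact logCutoff_eq_zero hL hx.le

lemma tendstoUniformlyOn_logCutoff {L : ℕ → ℝ≥0} (hL : Tendsto L atTop atTop) {s : Set E}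
    (hs : Bornology.IsBounded s) :
    TendstoUniformlyOn (fun j ↦ logCutoff (L j)) (fun _ ↦ 1) atTop s := by
  obtain ⟨r, hr⟩ := hs.exists_norm_le
  have hexp : Tendsto (fun j ↦ Real.exp (L j)) atTop atTop :=
    Real.tendsto_exp_atTop.comp (NNReal.tendsto_coe_atTop.mpr hL)
  refine tendstoUniformlyOn_iff.mpr fun ε hε ↦ ?_
  filter_upwards [hexp.eventually_ge_atTop r] with j hj x hx
  rwa [logCutoff_eq_one ((hr x hx).trans hj), dist_self]

end SeminormedAddCommGroup

variable {E : Type*} [NormedAddCommGroup E] [NormedSpace ℝ E]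

lemma fderiv_logCutoff_eq_zero_of_norm_le {L : ℝ≥0} {x : E} (hx : ‖x‖ ≤ Real.exp L) :
    fderiv ℝ (logCutoff L) x = 0 :=
  IsLocalMax.fderiv_eq_zero <| Eventually.of_forall fun y ↦
    (logCutoff_le_one L y).trans_eq (logCutoff_eq_one hx).symm

lemma fderiv_logCutoff_eq_zero_of_le_norm {L : ℝ≥0} {x : E} (hL : 0 < L)
    (hx : Real.exp (2 * L) ≤ ‖x‖) : fderiv ℝ (logCutoff L) x = 0 :=
  IsLocalMin.fderiv_eq_zero <| Eventually.of_forall fun y ↦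
    (logCutoff_eq_zero hL hx).trans_le (logCutoff_nonneg L y)

lemma norm_fderiv_logCutoff_le (L : ℝ≥0) {x : E} (hx : x ≠ 0) :
    ‖fderiv ℝ (logCutoff L) x‖ ≤ (L : ℝ)⁻¹ * ‖x‖⁻¹ := by
  have hbound : ∀ᶠ ρ : ℝ≥0 in 𝓝[<] ‖x‖₊, ‖fderiv ℝ (logCutoff L) x‖ ≤ L⁻¹ * (ρ : ℝ)⁻¹ := by
    filter_upwards [Ioo_mem_nhdsLT (nnnorm_pos.mpr hx)] with ρ ⟨hρ, hρx⟩
    have hmem : {y : E | ρ ≤ max 1 ‖y‖} ∈ 𝓝 x := by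
      filter_upwards [continuous_nnnorm.continuousAt.eventually_const_lt hρx] with y hy
      exact le_max_of_le_right (NNReal.coe_le_coe.mpr hy.le)
    exact_mod_cast norm_fderiv_le_of_lipschitzOn ℝ hmem (lipschitzOnWith_logCutoff L hρ)
  have hlim : Tendsto (fun ρ : ℝ≥0 ↦ (L : ℝ)⁻¹ * (ρ : ℝ)⁻¹) (𝓝[<] ‖x‖₊)
      (𝓝 ((L : ℝ)⁻¹ * ‖x‖⁻¹)) :=
    (((NNReal.continuous_coe.tendsto ‖x‖₊).inv₀ (norm_ne_zero_iff.mpr hx)).const_mul _).mono_left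
      nhdsWithin_le_nhds
  have : (𝓝[<] ‖x‖₊).NeBot := nhdsLT_neBot_of_exists_lt ⟨0, nnnorm_pos.mpr hx⟩
  exact ge_of_tendsto hlim hbound


lemma sq_norm_fderiv_logCutoff_le {m : ℕ} (hm : 0 < m) (x : E) :
    ‖fderiv ℝ (logCutoff (m : ℝ≥0)) x‖ ^ 2 ≤ ∑ i ∈ Finset.Ico m (2 * m),
      (ball (0 : E) (Real.exp (i + 1))).indicator (fun _ ↦ ((m * Real.exp i)⁻¹) ^ 2) x := by
  have hterm : ∀ i ∈ Finset.Ico m (2 * m),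
      0 ≤ (ball (0 : E) (Real.exp (i + 1))).indicator (fun _ ↦ ((m * Real.exp i)⁻¹) ^ 2) x :=
    fun i _ ↦ indicator_nonneg (fun _ _ ↦ by positivity) x
  by_cases hzero : fderiv ℝ (logCutoff (m : ℝ≥0)) x = 0
  · simpa only [hzero, norm_zero, zero_pow two_ne_zero] using Finset.sum_nonneg hterm
  have hinner : Real.exp m < ‖x‖ := by
    contrapose! hzero
    exact fderiv_logCutoff_eq_zero_of_norm_le (by exact_mod_cast hzero)
  have houter : ‖x‖ < Real.exp (2 * m) := by
    contrapose! hzero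
    exact fderiv_logCutoff_eq_zero_of_le_norm (by exact_mod_cast hm) (by exact_mod_cast hzero)
  obtain ⟨i, hi, hix, hxi⟩ := exists_mem_Ico_exp_le_lt_exp hinner.le (by exact_mod_cast houter)
  have hx : x ≠ 0 := norm_pos_iff.mp ((Real.exp_pos _).trans hinner)
  refine le_trans ?_ (Finset.single_le_sum hterm hi)
  rw [indicator_of_mem (mem_ball_zero_iff.mpr hxi), mul_inv]
  gcongr
  calc ‖fderiv ℝ (logCutoff (m : ℝ≥0)) x‖
      ≤ (m : ℝ)⁻¹ * ‖x‖⁻¹ := by exact_mod_cast norm_fderiv_logCutoff_le m hx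
    _ ≤ (m : ℝ)⁻¹ * (Real.exp i)⁻¹ := by gcongr

variable [ProperSpace E] [MeasurableSpace E] [BorelSpace E] (μ : Measure E)
  [IsFiniteMeasureOnCompacts μ]

lemma integrable_sq_norm_fderiv_logCutoff {m : ℕ} (hm : 0 < m) :
    Integrable (fun x ↦ ‖fderiv ℝ (logCutoff (m : ℝ≥0)) x‖ ^ 2) μ := by
  refine (integrable_finsetSum (Finset.Ico m (2 * m)) fun i _ ↦
    integrable_indicator_ball_const μ (0 : E) (Real.exp (i + 1)) (((m * Real.exp i)⁻¹) ^ 2)).mono'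
    ((measurable_fderiv ℝ _).norm.pow_const 2).aestronglyMeasurable (ae_of_all _ fun x ↦ ?_)
  rw [Real.norm_of_nonneg (by positivity)]
  exact sq_norm_fderiv_logCutoff_le hm x

lemma integral_sq_norm_fderiv_logCutoff_le {m : ℕ} (hm : 0 < m) :
    ∫ x, ‖fderiv ℝ (logCutoff (m : ℝ≥0)) x‖ ^ 2 ∂μ ≤ ∑ i ∈ Finset.Ico m (2 * m),
      ((m * Real.exp i)⁻¹) ^ 2 * μ.real (ball 0 (Real.exp (i + 1))) := by
  have hint (i : ℕ) := integrable_indicator_ball_const μ (0 : E) (Real.exp (i + 1))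
    (((m * Real.exp i)⁻¹) ^ 2)
  calc ∫ x, ‖fderiv ℝ (logCutoff (m : ℝ≥0)) x‖ ^ 2 ∂μ
      ≤ ∫ x, ∑ i ∈ Finset.Ico m (2 * m),
          (ball (0 : E) (Real.exp (i + 1))).indicator (fun _ ↦ ((m * Real.exp i)⁻¹) ^ 2) x ∂μ :=
        integral_mono (integrable_sq_norm_fderiv_logCutoff μ hm)
          (integrable_finsetSum _ fun i _ ↦ hint i) (sq_norm_fderiv_logCutoff_le hm)
    _ = ∑ i ∈ Finset.Ico m (2 * m),
          ((m * Real.exp i)⁻¹) ^ 2 * μ.real (ball 0 (Real.exp (i + 1))) := by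
        rw [integral_finsetSum _ fun i _ ↦ hint i]
        simp only [integral_indicator_const _ measurableSet_ball, smul_eq_mul, mul_comm]

open Asymptotics in
lemma tendsto_integral_sq_norm_fderiv_logCutoff
    (hμ : (fun R ↦ μ.real (ball 0 R)) =o[atTop] fun R ↦ R ^ 2 * Real.log R) :
    Tendsto (fun m : ℕ ↦ ∫ x, ‖fderiv ℝ (logCutoff (m : ℝ≥0)) x‖ ^ 2 ∂μ) atTop (𝓝 0) := by
  refine (isLittleO_one_iff ℝ).mp (isLittleO_iff.mpr fun c hc ↦ ?_)
  set ε := c / (2 * Real.exp 1 ^ 2)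
  have hε : 0 < ε := by positivity
  have hexp : Tendsto (fun i : ℕ ↦ Real.exp (i + 1)) atTop atTop :=
    Real.tendsto_exp_atTop.comp (tendsto_natCast_atTop_atTop.atTop_add tendsto_const_nhds)
  obtain ⟨N, hN⟩ := eventually_atTop.mp (hexp.eventually (hμ.def hε))
  filter_upwards [eventually_ge_atTop N, eventually_gt_atTop 0] with m hNm hm
  have hball : ∀ i ≥ m,
      μ.real (ball 0 (Real.exp (i + 1))) ≤ ε * (Real.exp (i + 1) ^ 2 * (i + 1)) := by
    intro i hi
    have h := hN i (hNm.trans hi)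
    rwa [Real.log_exp, Real.norm_of_nonneg measureReal_nonneg,
      Real.norm_of_nonneg (by positivity)] at h
  rw [norm_one, mul_one, Real.norm_of_nonneg (integral_nonneg fun x ↦ by positivity)]
  calc ∫ x, ‖fderiv ℝ (logCutoff (m : ℝ≥0)) x‖ ^ 2 ∂μ
      ≤ ∑ i ∈ Finset.Ico m (2 * m),
          ((m * Real.exp i)⁻¹) ^ 2 * μ.real (ball 0 (Real.exp (i + 1))) :=
        integral_sq_norm_fderiv_logCutoff_le μ hm
    _ ≤ 2 * Real.exp 1 ^ 2 * ε := sum_Ico_inv_mul_exp_sq_mul_le hm hε.le hball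
    _ = c := mul_div_cancel₀ c (by positivity)

end LogCutoff

lemma abs_inner_Aop_le (a : ℝ → ℝ) (p v : EuclideanSpace ℝ (Fin n)) :
    |⟪Aop a p v, v⟫| ≤ (|a ‖p‖| + ‖p‖ * |deriv a ‖p‖|) * ‖v‖ ^ 2 := by
  have hinner : ⟪Aop a p v, v⟫ = a ‖p‖ * ‖v‖ ^ 2 + deriv a ‖p‖ / ‖p‖ * ⟪p, v⟫ ^ 2 := by
    rw [Aop, inner_add_left, real_inner_smul_left, real_inner_smul_left, real_inner_self_eq_norm_sq]
    ring
  have hcauchy : ⟪p, v⟫ ^ 2 ≤ ‖p‖ ^ 2 * ‖v‖ ^ 2 := by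
    rw [← mul_pow, ← sq_abs]
    gcongr
    exact abs_real_inner_le_norm p v
  have hcancel : ‖p‖ ^ 2 / ‖p‖ = ‖p‖ := by rw [sq, mul_self_div_self]
  calc |⟪Aop a p v, v⟫|
      ≤ |a ‖p‖ * ‖v‖ ^ 2| + |deriv a ‖p‖ / ‖p‖ * ⟪p, v⟫ ^ 2| := hinner ▸ abs_add_le _ _
    _ = |a ‖p‖| * ‖v‖ ^ 2 + |deriv a ‖p‖| / ‖p‖ * ⟪p, v⟫ ^ 2 := by
        simp only [abs_mul, abs_div, abs_norm, abs_pow, sq_abs]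
    _ ≤ |a ‖p‖| * ‖v‖ ^ 2 + |deriv a ‖p‖| / ‖p‖ * (‖p‖ ^ 2 * ‖v‖ ^ 2) := by gcongr
    _ = (|a ‖p‖| + ‖p‖ ^ 2 / ‖p‖ * |deriv a ‖p‖|) * ‖v‖ ^ 2 := by ring
    _ = (|a ‖p‖| + ‖p‖ * |deriv a ‖p‖|) * ‖v‖ ^ 2 := by rw [hcancel]

lemma exists_abs_add_mul_abs_deriv_le {a : ℝ → ℝ} (ha : ContDiffOn ℝ 1 a (Ici 0))
    (M : ℝ) : ∃ D, ∀ t ∈ Icc 0 M, |a t| + t * |deriv a t| ≤ D := by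
  have hderiv : ContinuousOn (derivWithin a (Ici 0)) (Ici 0) :=
    ha.continuousOn_derivWithin (uniqueDiffOn_Ici 0) le_rfl
  have hcont : ContinuousOn (fun t ↦ |a t| + t * |derivWithin a (Ici 0) t|) (Icc 0 M) :=
    (ha.continuousOn.abs.add (continuousOn_id.mul hderiv.abs)).mono Icc_subset_Ici_self
  obtain ⟨D, hD⟩ := isCompact_Icc.bddAbove_image hcont
  refine ⟨D, fun t ht ↦ le_trans (le_of_eq ?_) (hD (mem_image_of_mem _ ht))⟩
  rcases ht.1.eq_or_lt with rfl | ht0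
  · simp only [zero_mul]
  · simp only [derivWithin_of_mem_nhds (Ici_mem_nhds ht0)]

lemma norm_setIntegral_energy_le {Ω : Set (EuclideanSpace ℝ (Fin n))} (hΩ : MeasurableSet Ω)
    {a : ℝ → ℝ} {u φ : EuclideanSpace ℝ (Fin n) → ℝ} {M D : ℝ} (hu : ∀ x ∈ Ω, ‖∇ u x‖ ≤ M)
    (hD : ∀ t ∈ Icc 0 M, |a t| + t * |deriv a t| ≤ D)
    (hφ : IntegrableOn (fun x ↦ ‖fderiv ℝ φ x‖ ^ 2) Ω) :
    ‖∫ x in Ω, ‖∇ u x‖ ^ 2 * ⟪Aop a (∇ u x) (∇ φ x), ∇ φ x⟫‖ ≤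
      M ^ 2 * D * ∫ x in Ω, ‖fderiv ℝ φ x‖ ^ 2 := by
  rw [← integral_const_mul]
  refine norm_integral_le_of_norm_le (hφ.const_mul _) (ae_restrict_of_forall_mem hΩ fun x hx ↦ ?_)
  have hA := abs_inner_Aop_le a (∇ u x) (∇ φ x)
  have hDx := hD _ ⟨norm_nonneg _, hu x hx⟩
  rw [norm_mul, norm_pow, norm_norm, Real.norm_eq_abs, mul_assoc, ← norm_gradient_eq_norm_fderiv]
  gcongr
  · exact hu x hx
  · exact hA.trans (by gcongr)

theorem moderate_energy_growth_of_bounded_gradient_general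
    {Ω : Set (EuclideanSpace ℝ (Fin n))} (hΩ : MeasurableSet Ω)
    {a : ℝ → ℝ} (ha : ContDiffOn ℝ 1 a (Ici 0))
    {u : EuclideanSpace ℝ (Fin n) → ℝ} {K : ℝ≥0}
    (hu : ∀ x ∈ Ω, ∃ s ∈ 𝓝 x, LipschitzOnWith K u s)
    (hvol : Tendsto (fun R ↦ volume.real (Ω ∩ ball 0 R) / (R ^ 2 * Real.log R)) atTop (𝓝 0)) :
    ModerateEnergyGrowth a u Ω := by
  have hgrad : ∀ x ∈ Ω, ‖∇ u x‖ ≤ K := fun x hx ↦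
    let ⟨_, hs, hus⟩ := hu x hx
    norm_gradient_le_of_lipschitzOnWith hs hus
  obtain ⟨D, hD⟩ := exists_abs_add_mul_abs_deriv_le ha K
  have hsmall : (fun R ↦ (volume.restrict Ω).real (ball 0 R)) =o[atTop]
      fun R ↦ R ^ 2 * Real.log R := by
    simp only [measureReal_restrict_apply measurableSet_ball, inter_comm _ Ω]
    refine Asymptotics.isLittleO_of_tendsto' ?_ hvol
    filter_upwards [eventually_gt_atTop 1] with R hR h
    exact absurd h (mul_pos (by positivity) (Real.log_pos hR)).ne'
  have hdirichlet :=
    (tendsto_integral_sq_norm_fderiv_logCutoff _ hsmall).const_mul ((K : ℝ) ^ 2 * D)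
  rw [mul_zero] at hdirichlet
  have hpos (j : ℕ) : (0 : ℝ≥0) < (j + 1 : ℕ) := Nat.cast_pos.mpr j.succ_pos
  refine ⟨fun j ↦ logCutoff (j + 1 : ℕ), fun j ↦ ⟨_, lipschitzWith_logCutoff _⟩,
    fun j ↦ hasCompactSupport_logCutoff (hpos j), fun j ↦ logCutoff_nonneg _,
    fun s hs _ ↦ tendstoUniformlyOn_logCutoff
      (tendsto_natCast_atTop_atTop.comp (tendsto_add_atTop_nat 1)) hs.isBounded, ?_⟩
  exact squeeze_zero_norm (fun j ↦ norm_setIntegral_energy_le hΩ hgrad hD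
    (integrable_sq_norm_fderiv_logCutoff _ j.succ_pos))
    (hdirichlet.comp (tendsto_add_atTop_nat 1))

/-- Proposition 2.5 of the paper, in `ℝⁿ`: for operators of mean curvature type, a bounded
gradient together with `|Ω ∩ B_R| = o(R² log R)` implies moderate energy growth. -/
theorem moderate_energy_growth_of_bounded_gradient
    (n : ℕ) (Ω : Set (EuclideanSpace ℝ (Fin n))) (hΩ : IsOpen Ω)
    (a : ℝ → ℝ) (ha : ContDiffOn ℝ 1 a (Ici 0))
    (hapos : ∀ t ≥ (0 : ℝ), 0 < a t) (hlam : ∀ t ≥ (0 : ℝ), 0 < lam1 a t)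
    (C₁ C₂ : ℝ) (hC₁ : 0 < C₁) (hC₂ : 0 < C₂)
    (hmc : ∀ t > (0 : ℝ), t ^ 2 * lam1 a t ≤ C₁ * lam2 a t ∧ C₁ * lam2 a t ≤ C₂ / t)
    (f : ℝ → ℝ) (hf : Continuous f)
    (u : EuclideanSpace ℝ (Fin n) → ℝ) (hu : ContDiffOn ℝ 1 u Ω)
    (hsol : IsWeakSolution a f Ω u)
    (hgrad : ∃ M, ∀ x ∈ Ω, ‖gradient u x‖ ≤ M)
    (hvol : Tendsto
      (fun R => (volume (Ω ∩ Metric.ball (0 : EuclideanSpace ℝ (Fin n)) R)).toReal /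
        (R ^ 2 * Real.log R)) atTop (nhds 0)) :
    ModerateEnergyGrowth a u Ω := by
  obtain ⟨M, hM⟩ := hgrad
  exact moderate_energy_growth_of_bounded_gradient_general hΩ.measurableSet ha
    (exists_mem_nhds_lipschitzOnWith_of_norm_gradient_le hΩ (hu.differentiableOn one_ne_zero)
      fun x hx ↦ (hM x hx).trans M.le_coe_toNNReal) hvol
end
end

section
/- Let Ω ⊆ ℝⁿ be a C¹ domain, f : ℝ → ℝ continuous, and a : [0,∞) → [0,∞) continuous with t ↦ t·a(t) bounded on (0,∞) and locally Lipschitz on [0,∞). Let u ∈ C²(Ω) ∩ C¹(cl Ω) be a weak solution of Δ_a u + f(u) = 0 in Ω. Assume that u is constant on ∂⋆Ω, that −C₀ ≤ f(u) ≤ 0 in Ω for some constant C₀ ≥ 0, and that inf_Ω u > −∞. Then there exists C > 0 such that ∫_{Ω ∩ {ρ ≤ R}} a(|∇u|)|∇u|² dx ≤ C·|Ω ∩ B_{4R}| for all sufficiently large R. -/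
open MeasureTheory Set Metric Filter
open scoped RealInnerProductSpace Topology ENNReal

noncomputable section

variable {n : ℕ}

/-!
Test the equation with `φ = ψ * (T ∘ u)`, where `T s = R * (arctan (s / R) - arctan (b / R))`, `b`
is the value of `u` on `∂⋆Ω` and `ψ` is a cutoff equal to `1` on `B_R` and supported in `B_{2R}`.
The function `φ` does not have compact support in `Ω`, but at each boundary point either `φ = 0` or
the flux `a(|∇u|) ∂_η u` vanishes. To see that `φ` is admissible, localise near a boundary point
with defining function `g` and cut `φ` off in the layer `{-2ε < g < -ε}`: the gradient of this
cutoff is `O(1 / ε)` on a set of measure `O(ε)`, and it is multiplied by `φ * ⟪a(|∇u|) ∇u, ∇g⟫`,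
which tends to `0` uniformly as `g` tends to `0`.

In the resulting identity, `T' ≥ 1 / 2` on `[-R, R]` makes the left-hand side control the energy in
`{ρ ≤ R}`. The source term is `O(1)` because `-C₀ ≤ f(u) ≤ 0` and `T ∘ u` is bounded below
independently of `R`, and the cutoff term is `O(1)` because `|T| ≤ π * R` and `|∇ψ| = O(1 / R)`.
-/

section Gradient

variable {E : Type*} [NormedAddCommGroup E] [InnerProductSpace ℝ E] [CompleteSpace E]

theorem hasGradientAt_mul {v w : E → ℝ} {Dv Dw x : E} (hv : HasGradientAt v Dv x)
    (hw : HasGradientAt w Dw x) :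
    HasGradientAt (fun y => v y * w y) (v x • Dw + w x • Dv) x := by
  rw [hasGradientAt_iff_hasFDerivAt] at *
  rw [map_add, map_smul, map_smul]
  exact hv.mul hw

theorem hasGradientAt_comp {T : ℝ → ℝ} {T' : ℝ} {w : E → ℝ} {Dw x : E}
    (hT : HasDerivAt T T' (w x)) (hw : HasGradientAt w Dw x) :
    HasGradientAt (fun y => T (w y)) (T' • Dw) x := by
  rw [hasGradientAt_iff_hasFDerivAt] at *
  rw [map_smul]
  exact hT.comp_hasFDerivAt x hw

theorem hasDerivAt_comp_line {w : E → ℝ} {Dw x e : E} {t : ℝ}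
    (hw : HasGradientAt w Dw (x + t • e)) :
    HasDerivAt (fun s : ℝ => w (x + s • e)) ⟪Dw, e⟫ t := by
  have hline : HasDerivAt (fun s : ℝ => x + s • e) e t := by
    simpa only [one_smul, id] using ((hasDerivAt_id t).smul_const e).const_add x
  exact hw.hasFDerivAt.comp_hasDerivAt t hline

theorem continuousOn_gradient {w : E → ℝ} {V : Set E} (hV : IsOpen V)
    (hw : ContDiffOn ℝ 1 w V) : ContinuousOn (gradient w) V :=
  (LinearIsometryEquiv.continuous _).comp_continuousOn
    (hw.continuousOn_fderiv_of_isOpen hV le_rfl)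

theorem gradient_eq_zero_of_notMem_tsupport {w : E → ℝ} {x : E} (hx : x ∉ tsupport w) :
    gradient w x = 0 := by
  rw [(notMem_tsupport_iff_eventuallyEq.1 hx).gradient_eq]
  exact gradient_fun_const x 0

end Gradient

/-- `w ∈ C¹(cl Ω)`, encoded as: `w` has gradient `Dw` in `Ω`, and both `w` and `Dw` are continuous
up to the boundary. -/
structure HasGradientUpTo {E : Type*} [NormedAddCommGroup E] [InnerProductSpace ℝ E]
    [CompleteSpace E] (w : E → ℝ) (Dw : E → E) (Ω : Set E) : Prop where
  continuousOn : ContinuousOn w (closure Ω)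
  continuousOn_gradient : ContinuousOn Dw (closure Ω)
  hasGradientAt : ∀ x ∈ Ω, HasGradientAt w (Dw x) x

namespace HasGradientUpTo

variable {E : Type*} [NormedAddCommGroup E] [InnerProductSpace ℝ E] [CompleteSpace E]
  {v w : E → ℝ} {Dv Dw : E → E} {Ω Ω' : Set E}

theorem mono (hw : HasGradientUpTo w Dw Ω) (hΩ' : Ω' ⊆ Ω) : HasGradientUpTo w Dw Ω' :=
  ⟨hw.continuousOn.mono (closure_mono hΩ'), hw.continuousOn_gradient.mono (closure_mono hΩ'),
    fun x hx => hw.hasGradientAt x (hΩ' hx)⟩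

theorem of_contDiffOn {V : Set E} (hV : IsOpen V) (hw : ContDiffOn ℝ 1 w V)
    (hΩV : closure Ω ⊆ V) : HasGradientUpTo w (gradient w) Ω where
  continuousOn := hw.continuousOn.mono hΩV
  continuousOn_gradient := (_root_.continuousOn_gradient hV hw).mono hΩV
  hasGradientAt _ hx := ((hw.contDiffAt (hV.mem_nhds (hΩV (subset_closure hx)))).differentiableAt
    one_ne_zero).hasGradientAt

theorem of_contDiff (hw : ContDiff ℝ 1 w) : HasGradientUpTo w (gradient w) Ω :=
  of_contDiffOn isOpen_univ hw.contDiffOn (subset_univ _)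

theorem mul (hv : HasGradientUpTo v Dv Ω) (hw : HasGradientUpTo w Dw Ω) :
    HasGradientUpTo (fun x => v x * w x) (fun x => v x • Dw x + w x • Dv x) Ω where
  continuousOn := hv.continuousOn.mul hw.continuousOn
  continuousOn_gradient := (hv.continuousOn.smul hw.continuousOn_gradient).add
    (hw.continuousOn.smul hv.continuousOn_gradient)
  hasGradientAt x hx := hasGradientAt_mul (hv.hasGradientAt x hx) (hw.hasGradientAt x hx)

theorem comp {T : ℝ → ℝ} (hT : ContDiff ℝ 1 T) (hw : HasGradientUpTo w Dw Ω) :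
    HasGradientUpTo (fun x => T (w x)) (fun x => deriv T (w x) • Dw x) Ω where
  continuousOn := hT.continuous.comp_continuousOn hw.continuousOn
  continuousOn_gradient := ((hT.continuous_deriv le_rfl).comp_continuousOn hw.continuousOn).smul
    hw.continuousOn_gradient
  hasGradientAt x hx := hasGradientAt_comp
    (hT.differentiable one_ne_zero _).hasDerivAt (hw.hasGradientAt x hx)

theorem contDiffOn (hw : HasGradientUpTo w Dw Ω) (hΩ : IsOpen Ω) : ContDiffOn ℝ 1 w Ω := by
  have hdual : ContinuousOn (fun x => InnerProductSpace.toDual ℝ E (Dw x)) Ω :=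
    (LinearIsometryEquiv.continuous _).comp_continuousOn
      (hw.continuousOn_gradient.mono subset_closure)
  rw [show (1 : WithTop ℕ∞) = 0 + 1 from rfl, contDiffOn_succ_iff_fderiv_of_isOpen hΩ,
    contDiffOn_zero]
  exact ⟨fun x hx => (hw.hasGradientAt x hx).differentiableAt.differentiableWithinAt, by simp,
    hdual.congr fun x hx => (hw.hasGradientAt x hx).hasFDerivAt.fderiv⟩

end HasGradientUpTo

/-- `w ∈ C¹(cl Ω)` vanishes in `Ω` off the compact set `K`. Since `K` may meet `∂Ω`, such a `w`
need not vanish on `∂Ω`; it is a legitimate test function in `Ω` when `K ⊆ Ω`. -/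
structure IsTestUpTo {E : Type*} [NormedAddCommGroup E] [InnerProductSpace ℝ E]
    [CompleteSpace E] (w : E → ℝ) (Dw : E → E) (Ω K : Set E) : Prop
    extends HasGradientUpTo w Dw Ω where
  isCompact : IsCompact K
  eq_zero : ∀ x ∈ Ω \ K, w x = 0

namespace IsTestUpTo

variable {E : Type*} [NormedAddCommGroup E] [InnerProductSpace ℝ E] [CompleteSpace E]
  {w θ : E → ℝ} {Dw : E → E} {Ω Ω' K : Set E}

theorem mono (hw : IsTestUpTo w Dw Ω K) (hΩ' : Ω' ⊆ Ω) : IsTestUpTo w Dw Ω' K :=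
  ⟨hw.toHasGradientUpTo.mono hΩ', hw.isCompact, fun x hx => hw.eq_zero x ⟨hΩ' hx.1, hx.2⟩⟩

theorem gradient_eq_zero (hw : IsTestUpTo w Dw Ω K) (hΩ : IsOpen Ω) :
    ∀ x ∈ Ω \ K, Dw x = 0 := by
  intro x hx
  have hzero : w =ᶠ[𝓝 x] fun _ => 0 :=
    eventually_of_mem ((hΩ.sdiff hw.isCompact.isClosed).mem_nhds hx) hw.eq_zero
  exact (hw.hasGradientAt x hx.1).unique ((hasGradientAt_const x 0).congr_of_eventuallyEq hzero)

theorem contDiff_mul (hθ : ContDiff ℝ 1 θ) (hw : IsTestUpTo w Dw Ω K) :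
    IsTestUpTo (fun x => θ x * w x) (fun x => θ x • Dw x + w x • gradient θ x) Ω
      (tsupport θ ∩ K) where
  toHasGradientUpTo := (HasGradientUpTo.of_contDiff hθ).mul hw.toHasGradientUpTo
  isCompact := hw.isCompact.inter_left (isClosed_tsupport θ)
  eq_zero x hx := by
    by_cases hxθ : x ∈ tsupport θ
    · rw [hw.eq_zero x ⟨hx.1, fun hxK => hx.2 ⟨hxθ, hxK⟩⟩, mul_zero]
    · rw [image_eq_zero_of_notMem_tsupport hxθ, zero_mul]

end IsTestUpTo

/-- The weak form of `div X + F = 0` in `Ω`, tested against `C¹` functions with compact support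
in `Ω`. -/
def WeakDivEq {E : Type*} [NormedAddCommGroup E] [InnerProductSpace ℝ E] [CompleteSpace E]
    [MeasurableSpace E] (μ : Measure E) (X : E → E) (F : E → ℝ) (Ω : Set E) : Prop :=
  ∀ φ : E → ℝ, ContDiff ℝ 1 φ → HasCompactSupport φ → tsupport φ ⊆ Ω →
    ∫ x in Ω, (⟪X x, gradient φ x⟫ - F x * φ x) ∂μ = 0

theorem integrableOn_of_eq_zero_off_compact {E : Type*} [TopologicalSpace E] [T2Space E]
    [MeasurableSpace E] [OpensMeasurableSpace E] {μ : Measure E} [IsFiniteMeasureOnCompacts μ]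
    {Ω K : Set E} {I : E → ℝ} (hΩ : MeasurableSet Ω) (hK : IsCompact K)
    (hI : ContinuousOn I (closure Ω ∩ K)) (hI0 : ∀ x ∈ Ω \ K, I x = 0) : IntegrableOn I Ω μ :=
  (hI.integrableOn_compact (hK.inter_left isClosed_closure)).of_forall_sdiff_eq_zero hΩ
    fun x hx => hI0 x ⟨hx.1, fun hxK => hx.2 ⟨subset_closure hx.1, hxK⟩⟩

theorem IsTestUpTo.integrableOn {E : Type*} [NormedAddCommGroup E] [InnerProductSpace ℝ E]
    [CompleteSpace E] [MeasurableSpace E] [OpensMeasurableSpace E] {μ : Measure E}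
    [IsFiniteMeasureOnCompacts μ] {X Dw : E → E} {F w : E → ℝ} {Ω K : Set E}
    (hw : IsTestUpTo w Dw Ω K) (hΩ : IsOpen Ω) (hX : ContinuousOn X (closure Ω))
    (hF : ContinuousOn F (closure Ω)) :
    IntegrableOn (fun x => ⟪X x, Dw x⟫ - F x * w x) Ω μ :=
  integrableOn_of_eq_zero_off_compact hΩ.measurableSet hw.isCompact
    (((hX.inner hw.continuousOn_gradient).sub (hF.mul hw.continuousOn)).mono inter_subset_left)
    fun x hx => by
      rw [hw.gradient_eq_zero hΩ x hx, hw.eq_zero x hx, inner_zero_right, mul_zero, sub_zero]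

namespace WeakDivEq

variable {E : Type*} [NormedAddCommGroup E] [InnerProductSpace ℝ E] [CompleteSpace E]
  [MeasurableSpace E] {μ : Measure E} {X : E → E} {F : E → ℝ} {Ω Ω' : Set E}

theorem mono [OpensMeasurableSpace E] (h : WeakDivEq μ X F Ω) (hΩ : IsOpen Ω) (hΩ' : Ω' ⊆ Ω) :
    WeakDivEq μ X F Ω' := by
  intro φ hφ hφc hφΩ'
  rw [← h φ hφ hφc (hφΩ'.trans hΩ')]
  refine (setIntegral_eq_of_subset_of_forall_sdiff_eq_zero hΩ.measurableSet hΩ'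
    fun x hx => ?_).symm
  have hxφ : x ∉ tsupport φ := fun hxφ => hx.2 (hφΩ' hxφ)
  rw [gradient_eq_zero_of_notMem_tsupport hxφ, image_eq_zero_of_notMem_tsupport hxφ,
    inner_zero_right, mul_zero, sub_zero]

theorem integral_eq_zero_of_subset [OpensMeasurableSpace E] (h : WeakDivEq μ X F Ω)
    (hΩ : IsOpen Ω) {w : E → ℝ} {Dw : E → E} {K : Set E} (hw : IsTestUpTo w Dw Ω K)
    (hKΩ : K ⊆ Ω) :
    ∫ x in Ω, (⟪X x, Dw x⟫ - F x * w x) ∂μ = 0 := by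
  set φ : E → ℝ := K.indicator w
  have hφw : EqOn φ w Ω := fun x hx => by
    by_cases hxK : x ∈ K
    · exact indicator_of_mem hxK w
    · exact (indicator_of_notMem hxK w).trans (hw.eq_zero x ⟨hx, hxK⟩).symm
  have hφK : tsupport φ ⊆ K := closure_minimal support_indicator_subset hw.isCompact.isClosed
  have hφ : ContDiff ℝ 1 φ := contDiff_iff_contDiffAt.2 fun x => by
    by_cases hx : x ∈ Ω
    · exact ((hw.contDiffOn hΩ).contDiffAt (hΩ.mem_nhds hx)).congr_of_eventuallyEq
        (hφw.eventuallyEq_of_mem (hΩ.mem_nhds hx))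
    · exact contDiffAt_const.congr_of_eventuallyEq
        (notMem_tsupport_iff_eventuallyEq.1 fun hxφ => hx (hKΩ (hφK hxφ)))
  rw [← h φ hφ (hw.isCompact.of_isClosed_subset (isClosed_tsupport φ) hφK) (hφK.trans hKΩ)]
  refine setIntegral_congr_fun hΩ.measurableSet fun x hx => ?_
  have hgrad : gradient φ x = Dw x := ((hw.hasGradientAt x hx).congr_of_eventuallyEq
    (hφw.eventuallyEq_of_mem (hΩ.mem_nhds hx))).gradient
  simp only [hgrad, hφw hx]

end WeakDivEq

theorem IsWeakSolution.weakDivEq {Ω : Set (EuclideanSpace ℝ (Fin n))} {a f : ℝ → ℝ}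
    {u : EuclideanSpace ℝ (Fin n) → ℝ} {Du : EuclideanSpace ℝ (Fin n) → EuclideanSpace ℝ (Fin n)}
    (h : IsWeakSolution a f Ω u) (hΩ : IsOpen Ω) (ha : ContinuousOn a (Ici 0))
    (hf : Continuous f) (hu : HasGradientUpTo u Du Ω) :
    WeakDivEq volume (fun x => a ‖Du x‖ • Du x) (fun x => f (u x)) Ω := by
  intro φ hφ hφc hφΩ
  obtain ⟨K, hK⟩ := hφ.lipschitzWith_of_hasCompactSupport hφc one_ne_zero
  have hDφ : Continuous (gradient φ) :=
    continuousOn_univ.1 (continuousOn_gradient isOpen_univ hφ.contDiffOn)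
  have haDu : ContinuousOn (fun x => a ‖Du x‖) (closure Ω) :=
    ha.comp hu.continuousOn_gradient.norm fun x _ => norm_nonneg (Du x)
  have hint_flux : IntegrableOn (fun x => ⟪a ‖Du x‖ • Du x, gradient φ x⟫) Ω :=
    integrableOn_of_eq_zero_off_compact hΩ.measurableSet hφc
      (((haDu.smul hu.continuousOn_gradient).inner hDφ.continuousOn).mono inter_subset_left)
      fun x hx => by rw [gradient_eq_zero_of_notMem_tsupport hx.2, inner_zero_right]
  have hint_source : IntegrableOn (fun x => f (u x) * φ x) Ω :=
    integrableOn_of_eq_zero_off_compact hΩ.measurableSet hφc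
      (((hf.comp_continuousOn hu.continuousOn).mul hφ.continuous.continuousOn).mono
        inter_subset_left)
      fun x hx => by rw [image_eq_zero_of_notMem_tsupport hx.2, mul_zero]
  rw [integral_sub hint_flux hint_source, ← h φ ⟨⟨K, hK⟩, hφc, hφΩ⟩, sub_eq_zero]
  refine setIntegral_congr_fun hΩ.measurableSet fun x hx => ?_
  simp only [real_inner_smul_left, (hu.hasGradientAt x hx).gradient]

section Layer

variable {E : Type*} [NormedAddCommGroup E]

theorem volume_line_inter_layer_le [InnerProductSpace ℝ E] [CompleteSpace E] {g : E → ℝ}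
    {B : Set E} {e : E} {c δ : ℝ} (hc : 0 < c) (hB : Convex ℝ B)
    (hg : ∀ x ∈ B, DifferentiableAt ℝ g x) (hslope : ∀ x ∈ B, c ≤ ⟪gradient g x, e⟫) (x : E) :
    volume {t : ℝ | x + t • e ∈ {y ∈ B | -δ ≤ g y ∧ g y < 0}} ≤ ENNReal.ofReal (δ / c) := by
  set I : Set ℝ := {t : ℝ | x + t • e ∈ B}
  have hI : Convex ℝ I :=
    (hB.translate_preimage_right x).linear_preimage (LinearMap.toSpanSingleton ℝ E e)
  have hderiv : ∀ t ∈ I, HasDerivAt (fun t : ℝ => g (x + t • e)) ⟪gradient g (x + t • e), e⟫ t :=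
    fun t ht => hasDerivAt_comp_line (hg _ ht).hasGradientAt
  have hgrowth := hI.mul_sub_le_image_sub_of_le_deriv
    (fun t ht => (hderiv t ht).continuousAt.continuousWithinAt)
    (fun t ht => (hderiv t (interior_subset ht)).differentiableAt.differentiableWithinAt)
    (fun t ht => (hslope _ (interior_subset ht : t ∈ I)).trans_eq
      (hderiv t (interior_subset ht)).deriv.symm)
  have hgap : ∀ s ∈ I, ∀ t ∈ I, -δ ≤ g (x + s • e) → g (x + t • e) < 0 → s ≤ t →
      t - s ≤ δ / c := by
    intro s hs t ht hgs hgt hst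
    rw [le_div_iff₀' hc]
    linarith [hgrowth s hs t ht hst]
  refine (Real.volume_le_diam _).trans (Metric.ediam_le fun s hs t ht => ?_)
  rw [edist_dist, Real.dist_eq]
  refine ENNReal.ofReal_le_ofReal ?_
  rcases le_total s t with hst | hts
  · rw [abs_sub_comm, abs_of_nonneg (sub_nonneg.2 hst)]
    exact hgap s hs.1 t ht.1 hs.2.1 ht.2.2 hst
  · rw [abs_of_nonneg (sub_nonneg.2 hts)]
    exact hgap t ht.1 s hs.1 ht.2.1 hs.2.2 hts

variable [MeasurableSpace E] [BorelSpace E] {μ : Measure E}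

theorem measure_le_mul_of_volume_line_le [NormedSpace ℝ E] [SecondCountableTopology E]
    [SFinite μ] [μ.IsAddRightInvariant] {S : Set E} {p e : E} {r : ℝ} {δ : ℝ≥0∞}
    (hS : MeasurableSet S) (hSp : S ⊆ ball p r)
    (hline : ∀ x, volume {t : ℝ | x + t • e ∈ S} ≤ δ) : μ S ≤ δ * μ (ball p (r + ‖e‖)) := by
  set ν : Measure ℝ := volume.restrict (Icc 0 1)
  set T : Set (E × ℝ) := {z | z.1 + z.2 • e ∈ S}
  have hT : MeasurableSet T :=
    (by fun_prop : Measurable fun z : E × ℝ => z.1 + z.2 • e) hS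
  have hslice : ∀ x, ν (Prod.mk x ⁻¹' T) ≤ (ball p (r + ‖e‖)).indicator (fun _ => δ) x := by
    intro x
    by_cases hx : x ∈ ball p (r + ‖e‖)
    · rw [indicator_of_mem hx]
      exact (Measure.restrict_apply_le _ _).trans (hline x)
    · rw [indicator_of_notMem hx, nonpos_iff_eq_zero, Measure.restrict_apply' measurableSet_Icc]
      convert measure_empty (μ := volume)
      refine eq_empty_of_forall_notMem fun t ⟨htS, ht⟩ => hx ?_
      have hmem : dist (x + t • e) p < r := hSp htS
      have hstep : dist x (x + t • e) ≤ ‖e‖ := by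
        rw [dist_self_add_right, norm_smul, Real.norm_of_nonneg ht.1]
        exact mul_le_of_le_one_left (norm_nonneg e) ht.2
      exact (dist_triangle _ _ _).trans_lt (by linarith)
  calc μ S = ∫⁻ t, μ ((fun x => (x, t)) ⁻¹' T) ∂ν := by
        have htranslate : ∀ t : ℝ, μ ((fun x => (x, t)) ⁻¹' T) = μ S := fun t =>
          measure_preimage_add_right μ (t • e) S
        simp [htranslate, ν]
    _ = ∫⁻ x, ν (Prod.mk x ⁻¹' T) ∂μ := by
        rw [← Measure.prod_apply_symm hT, Measure.prod_apply hT]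
    _ ≤ ∫⁻ x, (ball p (r + ‖e‖)).indicator (fun _ => δ) x ∂μ := lintegral_mono hslice
    _ = δ * μ (ball p (r + ‖e‖)) := lintegral_indicator_const measurableSet_ball δ

theorem measureReal_layer_le [InnerProductSpace ℝ E] [FiniteDimensional ℝ E]
    [μ.IsAddHaarMeasure] {g : E → ℝ} {p e : E} {r c δ : ℝ} (hc : 0 < c) (hδ : 0 ≤ δ)
    (hg : ∀ x ∈ ball p r, DifferentiableAt ℝ g x)
    (hslope : ∀ x ∈ ball p r, c ≤ ⟪gradient g x, e⟫) :
    μ.real {x ∈ ball p r | -δ ≤ g x ∧ g x < 0} ≤ δ / c * μ.real (ball p (r + ‖e‖)) := by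
  have hgc : ContinuousOn g (ball p r) := fun x hx => (hg x hx).continuousAt.continuousWithinAt
  have hmeas : MeasurableSet {x ∈ ball p r | -δ ≤ g x ∧ g x < 0} := by
    have hdiff : {x ∈ ball p r | -δ ≤ g x ∧ g x < 0} =
        (ball p r ∩ g ⁻¹' Iio 0) \ (ball p r ∩ g ⁻¹' Iio (-δ)) := by
      ext x
      have : ¬ g x < -δ ↔ -δ ≤ g x := not_lt
      change _ ∧ _ ∧ _ ↔ (_ ∧ g x < 0) ∧ ¬(_ ∧ g x < -δ)
      tauto
    rw [hdiff]
    exact (hgc.isOpen_inter_preimage isOpen_ball isOpen_Iio).measurableSet.diff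
      (hgc.isOpen_inter_preimage isOpen_ball isOpen_Iio).measurableSet
  have hle := measure_le_mul_of_volume_line_le (μ := μ) hmeas (sep_subset _ _)
    (volume_line_inter_layer_le hc (convex_ball p r) hg hslope)
  have htop : ENNReal.ofReal (δ / c) * μ (ball p (r + ‖e‖)) ≠ ⊤ :=
    ENNReal.mul_ne_top ENNReal.ofReal_ne_top measure_ball_lt_top.ne
  simpa only [measureReal_def, ENNReal.toReal_mul, ENNReal.toReal_ofReal (div_nonneg hδ hc.le)]
    using ENNReal.toReal_mono htop hle

end Layer

section BoundaryLayer

theorem exists_contDiff_step :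
    ∃ χ : ℝ → ℝ, ContDiff ℝ 1 χ ∧ (∀ s, |χ s| ≤ 1) ∧ (∀ s ≤ -2, χ s = 1) ∧
      (∀ s ≥ -1, χ s = 0) ∧ (∀ s < -2, deriv χ s = 0) ∧ ∃ M, ∀ s, |deriv χ s| ≤ M := by
  set χ : ℝ → ℝ := fun s => Real.smoothTransition (-1 - s)
  have hχ : ContDiff ℝ 1 χ := Real.smoothTransition.contDiff.comp (contDiff_const.sub contDiff_id)
  have hone : ∀ s ≤ -2, χ s = 1 := fun s hs =>
    Real.smoothTransition.one_of_one_le (by linarith)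
  have hzero : ∀ s ≥ -1, χ s = 0 := fun s hs =>
    Real.smoothTransition.zero_of_nonpos (by linarith)
  have hderiv_left : ∀ s < -2, deriv χ s = 0 := fun s hs => by
    have hconst : χ =ᶠ[𝓝 s] fun _ => 1 :=
      eventually_of_mem (Iio_mem_nhds hs) fun t ht => hone t (le_of_lt ht)
    rw [hconst.deriv_eq, deriv_const]
  have hderiv_right : ∀ s > -1, deriv χ s = 0 := fun s hs => by
    have hconst : χ =ᶠ[𝓝 s] fun _ => 0 :=
      eventually_of_mem (Ioi_mem_nhds hs) fun t ht => hzero t (le_of_lt ht)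
    rw [hconst.deriv_eq, deriv_const]
  obtain ⟨M, hM⟩ := isCompact_Icc.exists_bound_of_continuousOn
    (hχ.continuous_deriv le_rfl).continuousOn (s := Icc (-2) (-1))
  have hM_nonneg : 0 ≤ M := (norm_nonneg _).trans (hM (-1) (by norm_num))
  refine ⟨χ, hχ, fun s => ?_, hone, hzero, hderiv_left, M, fun s => ?_⟩
  · exact abs_le.2 ⟨by linarith [Real.smoothTransition.nonneg (-1 - s)],
      Real.smoothTransition.le_one _⟩
  · rcases lt_or_ge s (-2) with hs | hs
    · simpa only [hderiv_left s hs, abs_zero] using hM_nonneg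
    rcases lt_or_ge (-1) s with hs' | hs'
    · simpa only [hderiv_right s hs', abs_zero] using hM_nonneg
    · exact hM s ⟨hs, hs'⟩

theorem tendsto_zero_comap_of_isCompact {Y : Type*} [TopologicalSpace Y] {D Q : Set Y}
    {g G : Y → ℝ} (hQ : IsCompact Q) (hg : ContinuousOn g Q) (hG : ContinuousOn G Q)
    (hzero : ∀ x ∈ Q, g x = 0 → G x = 0) (hG0 : ∀ x ∈ D \ Q, G x = 0) :
    Tendsto G (comap g (𝓝 0) ⊓ 𝓟 D) (𝓝 0) := by
  refine (tendsto_iff_ultrafilter _ _ _).2 fun U hU => ?_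
  have hgU : Tendsto g U (𝓝 0) := tendsto_iff_comap.2 (hU.trans inf_le_left)
  have hUD : D ∈ U := le_principal_iff.1 (hU.trans inf_le_right)
  rcases U.mem_or_compl_mem Q with hUQ | hUQ
  · obtain ⟨x, hx, hUx⟩ := isCompact_iff_ultrafilter_le_nhds.1 hQ U (le_principal_iff.2 hUQ)
    have hUx' : (U : Filter Y) ≤ 𝓝[Q] x := le_inf hUx (le_principal_iff.2 hUQ)
    rw [← hzero x hx (tendsto_nhds_unique ((hg x hx).mono_left hUx') hgU)]
    exact (hG x hx).mono_left hUx'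
  · refine tendsto_const_nhds.congr' ?_
    filter_upwards [hUD, hUQ] with x hxD hxQ using (hG0 x ⟨hxD, hxQ⟩).symm

variable {α : Type*} [MeasurableSpace α] {μ : Measure α} {D : Set α} {g G : α → ℝ} {χ : ℝ → ℝ}

theorem tendsto_setIntegral_cutoff (hD : MeasurableSet D) (hG : IntegrableOn G D μ)
    (hg : AEStronglyMeasurable g (μ.restrict D)) (hneg : ∀ x ∈ D, g x < 0) (hχ : Continuous χ)
    (hχ_le : ∀ s, |χ s| ≤ 1) (hχ_one : ∀ s ≤ -2, χ s = 1) :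
    Tendsto (fun ε => ∫ x in D, χ (g x / ε) * G x ∂μ) (𝓝[>] 0) (𝓝 (∫ x in D, G x ∂μ)) := by
  refine tendsto_integral_filter_of_dominated_convergence (fun x => ‖G x‖)
    (Eventually.of_forall fun ε => ?_) (Eventually.of_forall fun ε => ?_) hG.norm ?_
  · simp only [div_eq_mul_inv]
    exact (hχ.comp_aestronglyMeasurable (hg.mul_const _)).mul hG.aestronglyMeasurable
  · refine Eventually.of_forall fun x => ?_
    rw [norm_mul]
    exact mul_le_of_le_one_left (norm_nonneg _) (hχ_le _)
  · refine (ae_restrict_iff' hD).2 (Eventually.of_forall fun x hx => ?_)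
    refine tendsto_const_nhds.congr' ?_
    have hsmall : ∀ᶠ ε in 𝓝[>] (0 : ℝ), ε < -g x / 2 :=
      nhdsWithin_le_nhds (Iio_mem_nhds (by linarith [hneg x hx]))
    filter_upwards [hsmall, self_mem_nhdsWithin] with ε hε hε_pos
    rw [hχ_one _ ((div_le_iff₀ hε_pos).2 (by linarith)), one_mul]

theorem norm_setIntegral_layer_le {χ' : ℝ → ℝ} {A M ε δ : ℝ} (hε : 0 < ε)
    (hD : MeasurableSet D) (hD_fin : μ D < ⊤)
    (hlayer : μ.real {x ∈ D | -(2 * ε) ≤ g x} ≤ A * ε)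
    (hG : ∀ x ∈ D, -(2 * ε) ≤ g x → |G x| ≤ δ) (hδ : 0 ≤ δ)
    (hχ'_zero : ∀ s < -2, χ' s = 0) (hχ'_le : ∀ s, |χ' s| ≤ M) :
    ‖∫ x in D, χ' (g x / ε) * (ε⁻¹ * G x) ∂μ‖ ≤ M * A * δ := by
  have hM : 0 ≤ M := (abs_nonneg _).trans (hχ'_le 0)
  set L : Set α := {x ∈ D | -(2 * ε) ≤ g x}
  have houtside : ∀ x ∈ D \ L, χ' (g x / ε) * (ε⁻¹ * G x) = 0 := fun x hx => by
    have hgx : g x < -(2 * ε) := not_le.1 fun h => hx.2 ⟨hx.1, h⟩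
    rw [hχ'_zero _ ((div_lt_iff₀ hε).2 (by linarith)), zero_mul]
  have hinside : ∀ x ∈ L, ‖χ' (g x / ε) * (ε⁻¹ * G x)‖ ≤ M * (ε⁻¹ * δ) := fun x hx => by
    rw [norm_mul, norm_mul, Real.norm_of_nonneg (inv_nonneg.2 hε.le)]
    gcongr
    · exact hχ'_le _
    · exact hG x hx.1 hx.2
  rw [setIntegral_eq_of_subset_of_forall_sdiff_eq_zero hD (sep_subset _ _) houtside]
  calc ‖∫ x in L, χ' (g x / ε) * (ε⁻¹ * G x) ∂μ‖ ≤ M * (ε⁻¹ * δ) * μ.real L :=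
        norm_setIntegral_le_of_norm_le_const
          ((measure_mono (sep_subset _ _)).trans_lt hD_fin) hinside
    _ ≤ M * (ε⁻¹ * δ) * (A * ε) := by gcongr
    _ = M * A * δ := by field_simp

theorem tendsto_setIntegral_layer {χ' : ℝ → ℝ} {A M : ℝ} (hD : MeasurableSet D)
    (hD_fin : μ D < ⊤) (hlayer : ∀ ε > 0, μ.real {x ∈ D | -(2 * ε) ≤ g x} ≤ A * ε)
    (hG : Tendsto G (comap g (𝓝 0) ⊓ 𝓟 D) (𝓝 0)) (hneg : ∀ x ∈ D, g x < 0)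
    (hχ'_zero : ∀ s < -2, χ' s = 0) (hχ'_le : ∀ s, |χ' s| ≤ M) :
    Tendsto (fun ε => ∫ x in D, χ' (g x / ε) * (ε⁻¹ * G x) ∂μ) (𝓝[>] 0) (𝓝 0) := by
  have hM : 0 ≤ M := (abs_nonneg _).trans (hχ'_le 0)
  have hA : 0 ≤ A := measureReal_nonneg.trans ((hlayer 1 one_pos).trans_eq (mul_one A))
  refine Metric.tendsto_nhds.2 fun κ hκ => ?_
  set δ : ℝ := κ / (M * A + 1)
  have hδ : 0 < δ := by positivity
  obtain ⟨m, hm, hGm⟩ : ∃ m > 0, ∀ x ∈ D, |g x| < m → |G x| < δ := by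
    have hev := eventually_inf_principal.1 (hG.eventually (ball_mem_nhds 0 hδ))
    obtain ⟨m, hm, h⟩ := Metric.eventually_nhds_iff.1 (eventually_comap.1 hev)
    exact ⟨m, hm, fun x hxD hx => by simpa using h (y := g x) (by simpa using hx) x rfl hxD⟩
  have hsmall : ∀ᶠ ε in 𝓝[>] (0 : ℝ), ε < m / 2 :=
    nhdsWithin_le_nhds (Iio_mem_nhds (by linarith))
  filter_upwards [hsmall, self_mem_nhdsWithin] with ε hε (hε_pos : 0 < ε)
  have hG_layer : ∀ x ∈ D, -(2 * ε) ≤ g x → |G x| ≤ δ := fun x hxD hx =>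
    (hGm x hxD (abs_lt.2 ⟨by linarith, by linarith [hneg x hxD]⟩)).le
  rw [dist_zero_right]
  calc ‖∫ x in D, χ' (g x / ε) * (ε⁻¹ * G x) ∂μ‖ ≤ M * A * δ :=
        norm_setIntegral_layer_le hε_pos hD hD_fin (hlayer ε hε_pos) hG_layer hδ.le hχ'_zero
          hχ'_le
    _ < (M * A + 1) * δ := by gcongr; linarith
    _ = κ := mul_div_cancel₀ κ (by positivity)

end BoundaryLayer

namespace WeakDivEq

variable {E : Type*} [NormedAddCommGroup E] [InnerProductSpace ℝ E] [CompleteSpace E]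
  [MeasurableSpace E] [BorelSpace E] {μ : Measure E} {X : E → E} {F : E → ℝ} {D K : Set E}
  {g w : E → ℝ} {Dg Dw : E → E}

theorem integral_cutoff_add_layer_eq_zero (hdiv : WeakDivEq μ X F D) (hD : IsOpen D)
    (hg : HasGradientUpTo g Dg D) (hw : IsTestUpTo w Dw D K)
    (hKD : ∀ x ∈ K ∩ closure D, g x < 0 → x ∈ D) {χ : ℝ → ℝ} (hχ : ContDiff ℝ 1 χ)
    (hχ_zero : ∀ s ≥ -1, χ s = 0) {ε : ℝ} (hε : 0 < ε) :
    ∫ x in D, (χ (g x / ε) * (⟪X x, Dw x⟫ - F x * w x)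
      + deriv χ (g x / ε) * (ε⁻¹ * (w x * ⟪X x, Dg x⟫))) ∂μ = 0 := by
  have hderiv : ∀ s, deriv (fun s => χ (s / ε)) s = deriv χ (s / ε) * ε⁻¹ := fun s => by
    simpa only [div_eq_inv_mul, smul_eq_mul, mul_comm] using deriv_comp_mul_left ε⁻¹ χ s
  set K' : Set E := K ∩ closure D ∩ g ⁻¹' Iic (-ε)
  have hK'D : K' ⊆ D := fun x hx => hKD x hx.1 (lt_of_le_of_lt hx.2 (neg_lt_zero.2 hε))
  have htest := (hg.comp (hχ.comp (contDiff_id.div_const ε))).mul hw.toHasGradientUpTo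
  have hK'_compact : IsCompact K' := (hw.isCompact.inter_right isClosed_closure).of_isClosed_subset
    ((hg.continuousOn.mono inter_subset_right).preimage_isClosed_of_isClosed
      (hw.isCompact.isClosed.inter isClosed_closure) isClosed_Iic) inter_subset_left
  have hzero : ∀ x ∈ D \ K', χ (g x / ε) * w x = 0 := by
    rintro x ⟨hxD, hxK'⟩
    by_cases hxK : x ∈ K
    · have hgx : -ε < g x := not_le.1 fun h => hxK' ⟨⟨hxK, subset_closure hxD⟩, h⟩
      rw [hχ_zero _ ((le_div_iff₀ hε).2 (by linarith)), zero_mul]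
    · rw [hw.eq_zero x ⟨hxD, hxK⟩, mul_zero]
  rw [← hdiv.integral_eq_zero_of_subset hD ⟨htest, hK'_compact, hzero⟩ hK'D]
  refine integral_congr_ae (Eventually.of_forall fun x => ?_)
  simp only [Function.comp_def, id, hderiv, inner_add_right, real_inner_smul_right]
  ring

theorem integral_eq_zero_of_layer [IsFiniteMeasureOnCompacts μ] (hdiv : WeakDivEq μ X F D)
    (hD : IsOpen D) (hD_fin : μ D < ⊤) (hX : ContinuousOn X (closure D))
    (hF : ContinuousOn F (closure D)) (hg : HasGradientUpTo g Dg D) (hneg : ∀ x ∈ D, g x < 0)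
    (hw : IsTestUpTo w Dw D K) (hKD : ∀ x ∈ K ∩ closure D, g x < 0 → x ∈ D) {A : ℝ}
    (hlayer : ∀ ε > 0, μ.real {x ∈ D | -(2 * ε) ≤ g x} ≤ A * ε)
    (hflux : ∀ x ∈ K ∩ closure D, g x = 0 → w x * ⟪X x, Dg x⟫ = 0) :
    ∫ x in D, (⟪X x, Dw x⟫ - F x * w x) ∂μ = 0 := by
  obtain ⟨χ, hχ, hχ_le, hχ_one, hχ_zero, hχ'_zero, M, hχ'_le⟩ := exists_contDiff_step
  set I : E → ℝ := fun x => ⟪X x, Dw x⟫ - F x * w x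
  set G : E → ℝ := fun x => w x * ⟪X x, Dg x⟫
  have hI : IntegrableOn I D μ := hw.integrableOn hD hX hF
  have hg_cont : ContinuousOn g D := hg.continuousOn.mono subset_closure
  have hG : ContinuousOn G (closure D) := hw.continuousOn.mul (hX.inner hg.continuousOn_gradient)
  have hG0 : ∀ x ∈ D \ (K ∩ closure D), G x = 0 := fun x hx => by
    simp only [G, hw.eq_zero x ⟨hx.1, fun hxK => hx.2 ⟨hxK, subset_closure hx.1⟩⟩, zero_mul]
  have hG_lim : Tendsto G (comap g (𝓝 0) ⊓ 𝓟 D) (𝓝 0) :=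
    tendsto_zero_comap_of_isCompact (hw.isCompact.inter_right isClosed_closure)
      (hg.continuousOn.mono inter_subset_right) (hG.mono inter_subset_right) hflux hG0
  have hlim := (tendsto_setIntegral_cutoff hD.measurableSet hI
    (hg_cont.aestronglyMeasurable hD.measurableSet) hneg hχ.continuous hχ_le hχ_one).add
    (tendsto_setIntegral_layer hD.measurableSet hD_fin hlayer hG_lim hneg hχ'_zero hχ'_le)
  have hvanish : ∀ᶠ ε in 𝓝[>] (0 : ℝ),
      ∫ x in D, χ (g x / ε) * I x ∂μ + ∫ x in D, deriv χ (g x / ε) * (ε⁻¹ * G x) ∂μ = 0 := by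
    filter_upwards [self_mem_nhdsWithin] with ε (hε : 0 < ε)
    have hgε : ContinuousOn (fun x => g x / ε) (closure D) := hg.continuousOn.div_const ε
    have hlayer_int : IntegrableOn (fun x => deriv χ (g x / ε) * (ε⁻¹ * G x)) D μ :=
      integrableOn_of_eq_zero_off_compact hD.measurableSet
        (hw.isCompact.inter_right isClosed_closure)
        ((((hχ.continuous_deriv le_rfl).comp_continuousOn hgε).mul
          (continuousOn_const.mul hG)).mono inter_subset_left)
        fun x hx => by rw [hG0 x hx, mul_zero, mul_zero]
    have hcutoff_int : IntegrableOn (fun x => χ (g x / ε) * I x) D μ :=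
      hI.bdd_mul ((hχ.continuous.comp_continuousOn (hgε.mono subset_closure)).aestronglyMeasurable
        hD.measurableSet) (Eventually.of_forall fun x => hχ_le _)
    rw [← integral_add hcutoff_int hlayer_int]
    exact hdiv.integral_cutoff_add_layer_eq_zero hD hg hw hKD hχ hχ_zero hε
  rw [add_zero] at hlim
  exact tendsto_nhds_unique hlim (tendsto_const_nhds.congr' (hvanish.mono fun ε h => h.symm))

end WeakDivEq

/-- `g` is a regular `C¹` defining function of `Ω` in the open set `V`: its gradient does not
vanish in `V`, and `Ω` is the sublevel set `{g < 0}` there. -/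
structure IsDefiningFunctionOn {E : Type*} [NormedAddCommGroup E] [InnerProductSpace ℝ E]
    [CompleteSpace E] (g : E → ℝ) (V Ω : Set E) : Prop where
  isOpen : IsOpen V
  contDiffOn : ContDiffOn ℝ 1 g V
  gradient_ne_zero : ∀ x ∈ V, gradient g x ≠ 0
  inter_eq : Ω ∩ V = {x ∈ V | g x < 0}

namespace IsDefiningFunctionOn

variable {E : Type*} [NormedAddCommGroup E] [InnerProductSpace ℝ E] [CompleteSpace E]
  {g g' : E → ℝ} {V V' Ω : Set E} {x v Y : E}

theorem mem_iff (hg : IsDefiningFunctionOn g V Ω) (hxV : x ∈ V) : x ∈ Ω ↔ g x < 0 := by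
  simpa [hxV] using Set.ext_iff.1 hg.inter_eq x

theorem differentiableAt (hg : IsDefiningFunctionOn g V Ω) (hxV : x ∈ V) :
    DifferentiableAt ℝ g x :=
  (hg.contDiffOn.contDiffAt (hg.isOpen.mem_nhds hxV)).differentiableAt one_ne_zero

theorem mem_frontier_iff (hg : IsDefiningFunctionOn g V Ω) (hxV : x ∈ V) (hx : x ∈ closure Ω) :
    x ∈ frontier Ω ↔ g x = 0 := by
  have hgc := hg.contDiffOn.continuousOn
  have hle : g x ≤ 0 := by
    by_contra! hpos
    obtain ⟨y, hy, hyΩ⟩ := mem_closure_iff.1 hx _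
      (hgc.isOpen_inter_preimage hg.isOpen isOpen_Ioi) ⟨hxV, hpos⟩
    exact lt_asymm ((hg.mem_iff hy.1).1 hyΩ) hy.2
  constructor
  · refine fun hxΩ => hle.eq_of_not_lt fun hneg => hxΩ.2 ?_
    exact mem_interior.2 ⟨V ∩ g ⁻¹' Iio 0, fun y hy => (hg.mem_iff hy.1).2 hy.2,
      hgc.isOpen_inter_preimage hg.isOpen isOpen_Iio, hxV, hneg⟩
  · exact fun h0 => ⟨hx, fun hxi => ((hg.mem_iff hxV).1 (interior_subset hxi)).ne h0⟩

theorem eq_zero_of_mem_frontier (hg : IsDefiningFunctionOn g V Ω) (hxV : x ∈ V)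
    (hx : x ∈ frontier Ω) : g x = 0 :=
  (hg.mem_frontier_iff hxV (frontier_subset_closure hx)).1 hx

theorem deriv_line (hg : IsDefiningFunctionOn g V Ω) (hxV : x ∈ V) :
    deriv (fun t : ℝ => g (x + t • v)) 0 = ⟪gradient g x, v⟫ :=
  (hasDerivAt_comp_line (by simpa using (hg.differentiableAt hxV).hasGradientAt)).deriv

theorem eventually_line_mem (hg : IsDefiningFunctionOn g V Ω) (hxV : x ∈ V) :
    ∀ᶠ t : ℝ in 𝓝 0, x + t • v ∈ V :=
  ContinuousAt.eventually_mem (by fun_prop) (by simpa using hg.isOpen.mem_nhds hxV)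

theorem eventually_mem_of_inner_neg (hg : IsDefiningFunctionOn g V Ω) (hxV : x ∈ V)
    (hx : x ∈ frontier Ω) (hv : ⟪gradient g x, v⟫ < 0) : ∀ᶠ t : ℝ in 𝓝[>] 0, x + t • v ∈ Ω := by
  have hsign := eventually_nhdsWithin_sign_eq_of_deriv_neg (f := fun t : ℝ => g (x + t • v))
    (x₀ := 0) ((hg.deriv_line hxV).trans_lt hv) (by simpa using hg.eq_zero_of_mem_frontier hxV hx)
  filter_upwards [nhdsWithin_le_nhds hsign, nhdsWithin_le_nhds (hg.eventually_line_mem hxV),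
    self_mem_nhdsWithin] with t ht htV (htpos : 0 < t)
  rw [hg.mem_iff htV, ← sign_eq_neg_one_iff, ht, sign_eq_neg_one_iff]
  linarith

theorem eventually_notMem_of_inner_pos (hg : IsDefiningFunctionOn g V Ω) (hxV : x ∈ V)
    (hx : x ∈ frontier Ω) (hv : 0 < ⟪gradient g x, v⟫) : ∀ᶠ t : ℝ in 𝓝[>] 0, x + t • v ∉ Ω := by
  have hsign := eventually_nhdsWithin_sign_eq_of_deriv_pos (f := fun t : ℝ => g (x + t • v))
    (x₀ := 0) (hv.trans_eq (hg.deriv_line hxV).symm)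
    (by simpa using hg.eq_zero_of_mem_frontier hxV hx)
  filter_upwards [nhdsWithin_le_nhds hsign, nhdsWithin_le_nhds (hg.eventually_line_mem hxV),
    self_mem_nhdsWithin] with t ht htV (htpos : 0 < t)
  have hgt : 0 < g (x + t • v) := by
    rw [← sign_eq_one_iff, ht, sign_eq_one_iff]
    linarith
  exact fun hmem => lt_asymm hgt ((hg.mem_iff htV).1 hmem)

theorem inner_gradient_nonpos (hg : IsDefiningFunctionOn g V Ω)
    (hg' : IsDefiningFunctionOn g' V' Ω) (hxV : x ∈ V) (hxV' : x ∈ V') (hx : x ∈ frontier Ω)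
    (hv : ⟪gradient g x, v⟫ < 0) : ⟪gradient g' x, v⟫ ≤ 0 := by
  by_contra! hpos
  obtain ⟨t, hmem, hnotMem⟩ := ((hg.eventually_mem_of_inner_neg hxV hx hv).and
    (hg'.eventually_notMem_of_inner_pos hxV' hx hpos)).exists
  exact hnotMem hmem

theorem inner_gradient_eq_zero (hg : IsDefiningFunctionOn g V Ω)
    (hg' : IsDefiningFunctionOn g' V' Ω) (hxV : x ∈ V) (hxV' : x ∈ V') (hx : x ∈ frontier Ω)
    (hY : ⟪Y, gradient g' x⟫ = 0) : ⟪Y, gradient g x⟫ = 0 := by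
  by_contra hne
  set A := gradient g x
  set B := gradient g' x
  -- `v` points into `{g < 0}` thanks to its `Y` component, which `B` does not see.
  set v : E := (-(|⟪A, B⟫| + 1) / ⟪Y, A⟫) • Y + B
  have hAv : ⟪A, v⟫ < 0 := by
    rw [inner_add_right, real_inner_smul_right, real_inner_comm Y A, div_mul_cancel₀ _ hne]
    linarith [le_abs_self ⟪A, B⟫]
  have hBv : ⟪B, v⟫ = ‖B‖ ^ 2 := by
    rw [inner_add_right, real_inner_smul_right, real_inner_comm Y B, hY, mul_zero, zero_add,
      real_inner_self_eq_norm_sq]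
  have hB : 0 < ‖B‖ := norm_pos_iff.2 (hg'.gradient_ne_zero x hxV')
  exact absurd (hg.inner_gradient_nonpos hg' hxV hxV' hx hAv) (by rw [hBv, not_le]; positivity)

theorem exists_ball_inner_gradient_ge (hg : IsDefiningFunctionOn g V Ω) (hxV : x ∈ V) :
    ∃ r > 0, closedBall x r ⊆ V ∧
      ∀ y ∈ ball x r, ‖gradient g x‖ ^ 2 / 2 ≤ ⟪gradient g y, gradient g x⟫ := by
  have hnorm : 0 < ‖gradient g x‖ := norm_pos_iff.2 (hg.gradient_ne_zero x hxV)
  have hcont : ContinuousAt (fun y => ⟪gradient g y, gradient g x⟫) x :=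
    ((continuousOn_gradient hg.isOpen hg.contDiffOn).continuousAt
      (hg.isOpen.mem_nhds hxV)).inner continuousAt_const
  have hslope : ∀ᶠ y in 𝓝 x, ‖gradient g x‖ ^ 2 / 2 < ⟪gradient g y, gradient g x⟫ :=
    hcont.eventually_const_lt
      ((half_lt_self (by positivity)).trans_eq (real_inner_self_eq_norm_sq _).symm)
  obtain ⟨r, hr, hball⟩ := Metric.nhds_basis_closedBall.mem_iff.1
    (inter_mem (hg.isOpen.mem_nhds hxV) hslope)
  exact ⟨r, hr, hball.trans inter_subset_left,
    fun y hy => le_of_lt (hball (ball_subset_closedBall hy)).2⟩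

end IsDefiningFunctionOn

/-- `Ω` has `C¹` boundary with interior unit normal `η`, phrased through local defining
functions. -/
def HasC1Boundary {E : Type*} [NormedAddCommGroup E] [InnerProductSpace ℝ E] [CompleteSpace E]
    (Ω : Set E) (η : E → E) : Prop :=
  ∀ p ∈ frontier Ω, ∃ V g, p ∈ V ∧ IsDefiningFunctionOn g V Ω ∧
    η p = -(‖gradient g p‖⁻¹ • gradient g p)

theorem HasC1Boundary.inner_gradient_eq_zero {E : Type*} [NormedAddCommGroup E]
    [InnerProductSpace ℝ E] [CompleteSpace E] {Ω V : Set E} {η : E → E} {g : E → ℝ} {x Y : E}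
    (hη : HasC1Boundary Ω η) (hg : IsDefiningFunctionOn g V Ω) (hxV : x ∈ V)
    (hx : x ∈ frontier Ω) (hY : ⟪Y, η x⟫ = 0) : ⟪Y, gradient g x⟫ = 0 := by
  obtain ⟨V', g', hxV', hg', hηx⟩ := hη x hx
  refine hg.inner_gradient_eq_zero hg' hxV hxV' hx ?_
  have hnorm : ‖gradient g' x‖⁻¹ ≠ 0 :=
    inv_ne_zero (norm_ne_zero_iff.2 (hg'.gradient_ne_zero x hxV'))
  rw [hηx, inner_neg_right, real_inner_smul_right, neg_eq_zero] at hY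
  exact (mul_eq_zero.1 hY).resolve_left hnorm

section Green

variable {E : Type*} [NormedAddCommGroup E] [InnerProductSpace ℝ E] [FiniteDimensional ℝ E]

theorem exists_contDiff_partition_of_isCompact {ι : Type*} {K : Set E} {U : ι → Set E}
    (hK : IsCompact K) (hU : ∀ i, IsOpen (U i)) (hKU : K ⊆ ⋃ i, U i) :
    ∃ (s : Finset ι) (θ : s → E → ℝ), (∀ i, ContDiff ℝ 1 (θ i)) ∧ (∀ i, tsupport (θ i) ⊆ U i) ∧
      ∀ x ∈ K, ∑ i, θ i x = 1 := by
  obtain ⟨s, hs⟩ := hK.elim_finite_subcover U hU hKU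
  obtain ⟨θ, hθ⟩ := SmoothPartitionOfUnity.exists_isSubordinate (modelWithCornersSelf ℝ E)
    hK.isClosed (fun i : s => U i) (fun i => hU i) (by rwa [iUnion_subtype])
  refine ⟨s, fun i => θ i, fun i => (θ i).contMDiff.contDiff.of_le ?_, hθ, fun x hx => ?_⟩
  · exact_mod_cast le_top
  · rw [← finsum_eq_sum_of_fintype, θ.sum_eq_one hx]

variable [MeasurableSpace E] [BorelSpace E] {μ : Measure E} {X Dw η : E → E} {F g w : E → ℝ}
  {Ω V K : Set E}

theorem IsTestUpTo.setIntegral_eq_zero_of_locally [IsFiniteMeasureOnCompacts μ]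
    (hw : IsTestUpTo w Dw Ω K) (hΩ : IsOpen Ω) (hX : ContinuousOn X (closure Ω))
    (hF : ContinuousOn F (closure Ω))
    (hlocal : ∀ p ∈ K ∩ closure Ω, ∃ U, IsOpen U ∧ p ∈ U ∧
      ∀ θ : E → ℝ, ContDiff ℝ 1 θ → tsupport θ ⊆ U →
        ∫ x in Ω, (⟪X x, θ x • Dw x + w x • gradient θ x⟫ - F x * (θ x * w x)) ∂μ = 0) :
    ∫ x in Ω, (⟪X x, Dw x⟫ - F x * w x) ∂μ = 0 := by
  choose! U hU hpU hUθ using hlocal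
  obtain ⟨s, θ, hθ, hθU, hθ_sum⟩ := exists_contDiff_partition_of_isCompact
    (hw.isCompact.inter_right isClosed_closure) (U := fun p : ↥(K ∩ closure Ω) => U p)
    (fun p => hU p p.2) (fun p hp => mem_iUnion.2 ⟨⟨p, hp⟩, hpU p hp⟩)
  have hw_sum : ∀ x ∈ Ω, w x = ∑ i, θ i x * w x := fun x hx => by
    rw [← Finset.sum_mul]
    by_cases hxK : x ∈ K
    · rw [hθ_sum x ⟨hxK, subset_closure hx⟩, one_mul]
    · rw [hw.eq_zero x ⟨hx, hxK⟩, mul_zero]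
  have hDw_sum : ∀ x ∈ Ω, Dw x = ∑ i, (θ i x • Dw x + w x • gradient (θ i) x) := fun x hx => by
    refine ((hw.hasGradientAt x hx).congr_of_eventuallyEq
      (eventually_of_mem (hΩ.mem_nhds hx) fun y hy => (hw_sum y hy).symm)).unique ?_
    rw [hasGradientAt_iff_hasFDerivAt, map_sum]
    exact HasFDerivAt.fun_sum fun i _ =>
      ((hw.contDiff_mul (hθ i)).hasGradientAt x hx).hasFDerivAt
  calc ∫ x in Ω, (⟪X x, Dw x⟫ - F x * w x) ∂μ
      = ∫ x in Ω, ∑ i, (⟪X x, θ i x • Dw x + w x • gradient (θ i) x⟫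
          - F x * (θ i x * w x)) ∂μ := by
        refine setIntegral_congr_fun hΩ.measurableSet fun x hx => ?_
        rw [Finset.sum_sub_distrib, ← inner_sum, ← Finset.mul_sum, ← hw_sum x hx, ← hDw_sum x hx]
    _ = ∑ i, ∫ x in Ω, (⟪X x, θ i x • Dw x + w x • gradient (θ i) x⟫
          - F x * (θ i x * w x)) ∂μ :=
        integral_finsetSum _ fun i _ => (hw.contDiff_mul (hθ i)).integrableOn hΩ hX hF
    _ = 0 := Finset.sum_eq_zero fun i _ => hUθ i i.1.2 (θ i) (hθ i) (hθU i)

namespace WeakDivEq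

variable [μ.IsAddHaarMeasure]

theorem integral_eq_zero_of_subset_ball {p e : E} {r c : ℝ} (hdiv : WeakDivEq μ X F Ω)
    (hΩ : IsOpen Ω) (hX : ContinuousOn X (closure Ω)) (hF : ContinuousOn F (closure Ω))
    (hg : IsDefiningFunctionOn g V Ω) (hpV : closedBall p r ⊆ V) (hc : 0 < c)
    (hslope : ∀ x ∈ ball p r, c ≤ ⟪gradient g x, e⟫) (hw : IsTestUpTo w Dw Ω K)
    (hK : K ⊆ ball p r) (hflux : ∀ x ∈ frontier Ω ∩ V, w x * ⟪X x, gradient g x⟫ = 0) :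
    ∫ x in Ω, (⟪X x, Dw x⟫ - F x * w x) ∂μ = 0 := by
  set D : Set E := Ω ∩ ball p r
  have hDΩ : D ⊆ Ω := inter_subset_left
  have hball : ball p r ⊆ V := ball_subset_closedBall.trans hpV
  have hDV : closure D ⊆ V :=
    ((closure_mono inter_subset_right).trans closure_ball_subset_closedBall).trans hpV
  have hneg : ∀ x ∈ D, g x < 0 := fun x hx => (hg.mem_iff (hball hx.2)).1 hx.1
  have hlayer : ∀ ε > 0, μ.real {x ∈ D | -(2 * ε) ≤ g x}
      ≤ 2 / c * μ.real (ball p (r + ‖e‖)) * ε := fun ε hε =>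
    calc μ.real {x ∈ D | -(2 * ε) ≤ g x}
        ≤ μ.real {x ∈ ball p r | -(2 * ε) ≤ g x ∧ g x < 0} :=
          measureReal_mono (fun x hx => ⟨hx.1.2, hx.2, hneg x hx.1⟩)
            ((measure_mono (sep_subset _ _)).trans_lt measure_ball_lt_top).ne
      _ ≤ 2 * ε / c * μ.real (ball p (r + ‖e‖)) :=
          measureReal_layer_le hc (by positivity) (fun x hx => hg.differentiableAt (hball hx))
            hslope
      _ = 2 / c * μ.real (ball p (r + ‖e‖)) * ε := by ring
  have hvanish : ∀ x ∈ Ω \ D, ⟪X x, Dw x⟫ - F x * w x = 0 := fun x hx => by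
    have hxK : x ∈ Ω \ K := ⟨hx.1, fun hxK => hx.2 ⟨hx.1, hK hxK⟩⟩
    rw [hw.gradient_eq_zero hΩ x hxK, hw.eq_zero x hxK, inner_zero_right, mul_zero, sub_zero]
  rw [setIntegral_eq_of_subset_of_forall_sdiff_eq_zero hΩ.measurableSet hDΩ hvanish]
  refine (hdiv.mono hΩ hDΩ).integral_eq_zero_of_layer (hΩ.inter isOpen_ball)
    ((measure_mono inter_subset_right).trans_lt measure_ball_lt_top)
    (hX.mono (closure_mono hDΩ)) (hF.mono (closure_mono hDΩ))
    (.of_contDiffOn hg.isOpen hg.contDiffOn hDV) hneg (hw.mono hDΩ) ?_ hlayer ?_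
  · exact fun x hx hgx => ⟨(hg.mem_iff (hDV hx.2)).2 hgx, hK hx.1⟩
  · exact fun x hx hgx => hflux x
      ⟨(hg.mem_frontier_iff (hDV hx.2) (closure_mono hDΩ hx.2)).2 hgx, hDV hx.2⟩

theorem integral_eq_zero_of_flux (hdiv : WeakDivEq μ X F Ω) (hΩ : IsOpen Ω)
    (hX : ContinuousOn X (closure Ω)) (hF : ContinuousOn F (closure Ω)) (hη : HasC1Boundary Ω η)
    (hw : IsTestUpTo w Dw Ω K) (hflux : ∀ x ∈ frontier Ω, w x = 0 ∨ ⟪X x, η x⟫ = 0) :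
    ∫ x in Ω, (⟪X x, Dw x⟫ - F x * w x) ∂μ = 0 := by
  refine hw.setIntegral_eq_zero_of_locally hΩ hX hF fun p ⟨_, hp⟩ => ?_
  by_cases hpΩ : p ∈ Ω
  · exact ⟨Ω, hΩ, hpΩ, fun θ hθ hθΩ => hdiv.integral_eq_zero_of_subset hΩ (hw.contDiff_mul hθ)
      (inter_subset_left.trans hθΩ)⟩
  · obtain ⟨V, g, hpV, hg, -⟩ := hη p (hΩ.frontier_eq ▸ ⟨hp, hpΩ⟩)
    obtain ⟨r, hr, hrV, hslope⟩ := hg.exists_ball_inner_gradient_ge hpV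
    have hgrad_p : 0 < ‖gradient g p‖ := norm_pos_iff.2 (hg.gradient_ne_zero p hpV)
    refine ⟨ball p r, isOpen_ball, mem_ball_self hr, fun θ hθ hθU =>
      hdiv.integral_eq_zero_of_subset_ball hΩ hX hF hg hrV (by positivity) hslope
        (hw.contDiff_mul hθ) (inter_subset_left.trans hθU) fun x ⟨hx, hxV⟩ => ?_⟩
    rcases hflux x hx with hwx | hηx
    · rw [hwx, mul_zero, zero_mul]
    · rw [hη.inner_gradient_eq_zero hg hxV hx hηx, mul_zero]

end WeakDivEq

end Green

/-- A smooth bounded truncation of `s ↦ s - b`: its range has length `π * R`, and on `[-R, R]` its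
slope lies between `1 / 2` and `1`. -/
def arctanTrunc (b R s : ℝ) : ℝ := R * (Real.arctan (s / R) - Real.arctan (b / R))

section ArctanTrunc

variable {b R s : ℝ}

theorem contDiff_arctanTrunc : ContDiff ℝ 1 (arctanTrunc b R) :=
  contDiff_const.mul ((Real.contDiff_arctan.comp (contDiff_id.div_const R)).sub contDiff_const)

theorem deriv_arctanTrunc (hR : R ≠ 0) : deriv (arctanTrunc b R) s = 1 / (1 + (s / R) ^ 2) := by
  have hderiv := (((Real.hasDerivAt_arctan (s / R)).comp s
    ((hasDerivAt_id s).div_const R)).sub_const (Real.arctan (b / R))).const_mul R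
  refine (hderiv.congr_deriv ?_).deriv
  field_simp

theorem deriv_arctanTrunc_nonneg (hR : R ≠ 0) : 0 ≤ deriv (arctanTrunc b R) s := by
  rw [deriv_arctanTrunc hR]
  positivity

theorem half_le_deriv_arctanTrunc (hR : 0 < R) (hs : |s| ≤ R) :
    1 / 2 ≤ deriv (arctanTrunc b R) s := by
  rw [deriv_arctanTrunc hR.ne']
  have hsq : (s / R) ^ 2 ≤ 1 := by
    rwa [sq_le_one_iff_abs_le_one, abs_div, abs_of_pos hR, div_le_one hR]
  exact one_div_le_one_div_of_le (by positivity) (by linarith)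

theorem abs_arctanTrunc_le (hR : 0 ≤ R) : |arctanTrunc b R s| ≤ Real.pi * R := by
  rw [arctanTrunc, abs_mul, abs_of_nonneg hR, mul_comm]
  refine mul_le_mul_of_nonneg_right (abs_le.2 ?_) hR
  constructor <;> linarith [Real.arctan_lt_pi_div_two (s / R), Real.arctan_lt_pi_div_two (b / R),
    Real.neg_pi_div_two_lt_arctan (s / R), Real.neg_pi_div_two_lt_arctan (b / R)]

theorem neg_max_sub_zero_le_arctanTrunc (hR : 0 < R) : -max (b - s) 0 ≤ arctanTrunc b R s := by
  have hb : arctanTrunc b R b = 0 := by rw [arctanTrunc, sub_self, mul_zero]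
  have hdiff : Differentiable ℝ (arctanTrunc b R) := contDiff_arctanTrunc.differentiable one_ne_zero
  rcases le_total b s with hbs | hsb
  · have hmono : Monotone (arctanTrunc b R) :=
      monotone_of_deriv_nonneg hdiff fun _ => deriv_arctanTrunc_nonneg hR.ne'
    linarith [hmono hbs, le_max_right (b - s) 0]
  · have hslope : ∀ t, deriv (arctanTrunc b R) t ≤ 1 := fun t => by
      rw [deriv_arctanTrunc hR.ne', div_le_one (by positivity)]
      linarith [sq_nonneg (t / R)]
    linarith [image_sub_le_mul_sub_of_deriv_le hdiff hslope hsb, le_max_left (b - s) 0]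

end ArctanTrunc

theorem exists_contDiff_cutoff (E : Type*) [NormedAddCommGroup E] [InnerProductSpace ℝ E]
    [FiniteDimensional ℝ E] :
    ∃ K : ℝ, ∀ R > 0, ∃ ψ : E → ℝ, ContDiff ℝ 1 ψ ∧ (∀ x, ψ x ∈ Icc 0 1) ∧
      (∀ x, ‖x‖ ≤ R → ψ x = 1) ∧ tsupport ψ ⊆ closedBall 0 (2 * R) ∧
      ∀ x, ‖gradient ψ x‖ ≤ K / R := by
  let β : ContDiffBump (0 : E) := ⟨1, 2, one_pos, one_lt_two⟩
  obtain ⟨K, hK⟩ := β.contDiff.lipschitzWith_of_hasCompactSupport β.hasCompactSupport one_ne_zero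
  refine ⟨K, fun R hR => ⟨fun x => β (R⁻¹ • x), β.contDiff.comp (contDiff_const_smul _),
    fun x => ⟨β.nonneg, β.le_one⟩, fun x hx => β.one_of_mem_closedBall ?_,
    closure_minimal (fun x hx => ?_) isClosed_closedBall, fun x => ?_⟩⟩
  · rw [mem_closedBall_zero_iff, norm_smul_of_nonneg (inv_nonneg.2 hR.le), inv_mul_le_iff₀ hR]
    exact hx.trans_eq (mul_one R).symm
  · have hmem : R⁻¹ • x ∈ ball (0 : E) 2 := β.support_eq ▸ hx
    rw [mem_ball_zero_iff, norm_smul_of_nonneg (inv_nonneg.2 hR.le), inv_mul_lt_iff₀ hR] at hmem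
    exact mem_closedBall_zero_iff.2 (hmem.le.trans_eq (mul_comm R 2))
  · have hlip : LipschitzWith (K * ‖R⁻¹‖₊) fun x => β (R⁻¹ • x) :=
      hK.comp (lipschitzWith_smul R⁻¹)
    calc ‖gradient (fun x => β (R⁻¹ • x)) x‖ = ‖fderiv ℝ (fun x => β (R⁻¹ • x)) x‖ :=
          LinearIsometryEquiv.norm_map _ _
      _ ≤ K * ‖R⁻¹‖₊ := norm_fderiv_le_of_lipschitz ℝ hlip
      _ = K / R := by rw [coe_nnnorm, norm_inv, Real.norm_of_nonneg hR.le, div_eq_mul_inv]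

theorem mul_sub_inner_le {E : Type*} [NormedAddCommGroup E] [InnerProductSpace ℝ E] {X Dψ : E}
    {F C₀ h D H ψ L G : ℝ} (hF : -C₀ ≤ F) (hF_nonpos : F ≤ 0) (hD : 0 ≤ D) (hDh : -D ≤ h)
    (hH : |h| ≤ H) (hψ : ψ ∈ Icc 0 1) (hX : ‖X‖ ≤ L) (hG : ‖Dψ‖ ≤ G) :
    h * (F * ψ - ⟪X, Dψ⟫) ≤ C₀ * D + H * (L * G) := by
  have hsource : F * ψ * h ≤ C₀ * D :=
    calc F * ψ * h ≤ F * ψ * -D :=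
          mul_le_mul_of_nonpos_left hDh (mul_nonpos_of_nonpos_of_nonneg hF_nonpos hψ.1)
      _ = -F * D * ψ := by ring
      _ ≤ -F * D := mul_le_of_le_one_right (mul_nonneg (neg_nonneg.2 hF_nonpos) hD) hψ.2
      _ ≤ C₀ * D := by gcongr; linarith
  have hcutoff : |h * ⟪X, Dψ⟫| ≤ H * (L * G) := by
    rw [abs_mul]
    gcongr
    · exact (abs_nonneg h).trans hH
    · refine (abs_real_inner_le_norm X Dψ).trans ?_
      gcongr
      exact (norm_nonneg X).trans hX
  linarith [neg_abs_le (h * ⟪X, Dψ⟫)]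

theorem arctanTrunc_mul_sub_inner_le {E : Type*} [NormedAddCommGroup E] [InnerProductSpace ℝ E]
    {X Dψ : E} {F C₀ ψ L K R b m s : ℝ} (hR : 0 < R) (hF : F ∈ Icc (-C₀) 0) (hms : m ≤ s)
    (hψ : ψ ∈ Icc 0 1) (hX : ‖X‖ ≤ L) (hDψ : ‖Dψ‖ ≤ K / R) :
    arctanTrunc b R s * (F * ψ - ⟪X, Dψ⟫) ≤ C₀ * max (b - m) 0 + Real.pi * L * K := by
  have hlow : -max (b - m) 0 ≤ arctanTrunc b R s :=
    (neg_le_neg (max_le_max_right 0 (sub_le_sub_left hms b))).trans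
      (neg_max_sub_zero_le_arctanTrunc hR)
  have hscale : Real.pi * R * (L * (K / R)) = Real.pi * L * K := by field_simp
  rw [← hscale]
  exact mul_sub_inner_le hF.1 hF.2 (le_max_right _ _) hlow (abs_arctanTrunc_le hR.le) hψ hX hDψ

theorem setIntegral_le_const_mul_setIntegral {α : Type*} [MeasurableSpace α] {μ : Measure α}
    {S Ω : Set α} {I P : α → ℝ} {c : ℝ} (hS : MeasurableSet S) (hΩ : MeasurableSet Ω)
    (hSΩ : S ⊆ Ω) (hc : 0 ≤ c) (hP : IntegrableOn P Ω μ) (hI_nonneg : ∀ x ∈ S, 0 ≤ I x)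
    (hIP : ∀ x ∈ S, I x ≤ c * P x) (hP_nonneg : ∀ x ∈ Ω, 0 ≤ P x) :
    ∫ x in S, I x ∂μ ≤ c * ∫ x in Ω, P x ∂μ :=
  calc ∫ x in S, I x ∂μ ≤ ∫ x in S, c * P x ∂μ :=
        integral_mono_of_nonneg (ae_restrict_of_forall_mem hS hI_nonneg)
          ((hP.mono_set hSΩ).const_mul c) (ae_restrict_of_forall_mem hS hIP)
    _ = c * ∫ x in S, P x ∂μ := integral_const_mul c P
    _ ≤ c * ∫ x in Ω, P x ∂μ := mul_le_mul_of_nonneg_left (setIntegral_mono_set hP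
        (ae_restrict_of_forall_mem hΩ hP_nonneg) hSΩ.eventuallyLE) hc

section FluxEstimate

variable {E : Type*} [NormedAddCommGroup E] [InnerProductSpace ℝ E] [FiniteDimensional ℝ E]
  [MeasurableSpace E] [BorelSpace E] {μ : Measure E} [μ.IsAddHaarMeasure] {X Du η : E → E}
  {F u ψ : E → ℝ} {T : ℝ → ℝ} {Ω B : Set E}

namespace WeakDivEq

theorem setIntegral_weighted_flux_le (hdiv : WeakDivEq μ X F Ω) (hΩ : IsOpen Ω)
    (hX : ContinuousOn X (closure Ω)) (hF : ContinuousOn F (closure Ω)) (hη : HasC1Boundary Ω η)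
    (hu : HasGradientUpTo u Du Ω) (hT : ContDiff ℝ 1 T)
    (hflux : ∀ x ∈ frontier Ω, T (u x) = 0 ∨ ⟪X x, η x⟫ = 0) (hψ : ContDiff ℝ 1 ψ)
    (hψc : HasCompactSupport ψ) (hψB : tsupport ψ ⊆ B) (hB : MeasurableSet B) (hB_fin : μ B ≠ ⊤)
    {C : ℝ} (hC : ∀ x ∈ Ω, T (u x) * (F x * ψ x - ⟪X x, gradient ψ x⟫) ≤ C) :
    IntegrableOn (fun x => ψ x * (deriv T (u x) * ⟪X x, Du x⟫)) Ω μ ∧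
      ∫ x in Ω, ψ x * (deriv T (u x) * ⟪X x, Du x⟫) ∂μ ≤ C * μ.real (Ω ∩ B) := by
  set P : E → ℝ := fun x => ψ x * (deriv T (u x) * ⟪X x, Du x⟫)
  set J : E → ℝ := fun x => T (u x) * (F x * ψ x - ⟪X x, gradient ψ x⟫)
  have htest := (HasGradientUpTo.of_contDiff hψ).mul (hu.comp hT)
  have hw : IsTestUpTo _ _ Ω (tsupport ψ) := ⟨htest, hψc, fun x hx => by
    rw [image_eq_zero_of_notMem_tsupport hx.2, zero_mul]⟩
  have hP : IntegrableOn P Ω μ := by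
    refine integrableOn_of_eq_zero_off_compact hΩ.measurableSet hψc (ContinuousOn.mono ?_
      inter_subset_left) fun x hx => by
        simp only [P, image_eq_zero_of_notMem_tsupport hx.2, zero_mul]
    exact hψ.continuous.continuousOn.mul (((hT.continuous_deriv le_rfl).comp_continuousOn
      hu.continuousOn).mul (hX.inner hu.continuousOn_gradient))
  have hgreen := hdiv.integral_eq_zero_of_flux hΩ hX hF hη hw fun x hx =>
    (hflux x hx).imp_left fun h => by rw [h, mul_zero]
  have hI := hw.integrableOn (μ := μ) hΩ hX hF
  have hJ_eq : ∀ x, P x - (⟪X x, ψ x • deriv T (u x) • Du x + T (u x) • gradient ψ x⟫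
      - F x * (ψ x * T (u x))) = J x := fun x => by
    simp only [P, J, inner_add_right, real_inner_smul_right]
    ring
  have hJ : IntegrableOn J Ω μ := (hP.sub hI).congr (Eventually.of_forall hJ_eq)
  have hJ_off : ∀ x ∈ Ω \ (Ω ∩ B), J x = 0 := fun x hx => by
    have hxψ : x ∉ tsupport ψ := fun h => hx.2 ⟨hx.1, hψB h⟩
    simp only [J, image_eq_zero_of_notMem_tsupport hxψ, gradient_eq_zero_of_notMem_tsupport hxψ,
      inner_zero_right, mul_zero, sub_zero]
  refine ⟨hP, ?_⟩
  calc ∫ x in Ω, P x ∂μ = ∫ x in Ω, J x ∂μ := by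
        rw [← sub_zero (∫ x in Ω, P x ∂μ), ← hgreen, ← integral_sub hP hI]
        exact integral_congr_ae (Eventually.of_forall hJ_eq)
    _ = ∫ x in Ω ∩ B, J x ∂μ := setIntegral_eq_of_subset_of_forall_sdiff_eq_zero hΩ.measurableSet
        inter_subset_left hJ_off
    _ ≤ ∫ _ in Ω ∩ B, C ∂μ := setIntegral_mono_on (hJ.mono_set inter_subset_left)
        (integrableOn_const (measure_inter_ne_top_of_right_ne_top hB_fin))
        (hΩ.measurableSet.inter hB) fun x hx => hC x hx.1
    _ = C * μ.real (Ω ∩ B) := by rw [setIntegral_const, smul_eq_mul, mul_comm]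

theorem exists_setIntegral_flux_le (hdiv : WeakDivEq μ X F Ω) (hΩ : IsOpen Ω)
    (hX : ContinuousOn X (closure Ω)) (hF : ContinuousOn F (closure Ω)) (hη : HasC1Boundary Ω η)
    (hu : HasGradientUpTo u Du Ω) {b : ℝ} (hflux : ∀ x ∈ frontier Ω, u x = b ∨ ⟪X x, η x⟫ = 0)
    {L : ℝ} (hL : ∀ x ∈ Ω, ‖X x‖ ≤ L) (hXu : ∀ x ∈ Ω, 0 ≤ ⟪X x, Du x⟫)
    {C₀ : ℝ} (hC₀ : ∀ x ∈ Ω, F x ∈ Icc (-C₀) 0) (hu_bdd : BddBelow (u '' Ω)) :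
    ∃ C > (0 : ℝ), ∀ R > 0, ∀ S, MeasurableSet S → S ⊆ Ω → (∀ x ∈ S, ‖x‖ ≤ R ∧ |u x| ≤ R) →
      ∫ x in S, ⟪X x, Du x⟫ ∂μ ≤ C * μ.real (Ω ∩ ball 0 (4 * R)) := by
  obtain ⟨m, hm⟩ := hu_bdd
  obtain ⟨K, hK⟩ := exists_contDiff_cutoff E
  set C : ℝ := C₀ * max (b - m) 0 + Real.pi * L * K
  refine ⟨max (2 * C) 1, by positivity, fun R hR S hS hSΩ hSR => ?_⟩
  obtain ⟨ψ, hψ, hψ_mem, hψ_one, hψ_supp, hψ_grad⟩ := hK R hR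
  have hψB : tsupport ψ ⊆ ball 0 (4 * R) :=
    hψ_supp.trans (closedBall_subset_ball (by linarith))
  have hbound : ∀ x ∈ Ω, arctanTrunc b R (u x) * (F x * ψ x - ⟪X x, gradient ψ x⟫) ≤ C :=
    fun x hx => arctanTrunc_mul_sub_inner_le hR (hC₀ x hx) (hm (mem_image_of_mem u hx))
      (hψ_mem x) (hL x hx) (hψ_grad x)
  obtain ⟨hint, hle⟩ := hdiv.setIntegral_weighted_flux_le hΩ hX hF hη hu
    (contDiff_arctanTrunc (b := b) (R := R))
    (fun x hx => (hflux x hx).imp_left fun h => by rw [h, arctanTrunc, sub_self, mul_zero])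
    hψ ((isCompact_closedBall _ _).of_isClosed_subset (isClosed_tsupport ψ) hψ_supp)
    hψB measurableSet_ball measure_ball_lt_top.ne hbound
  set P : E → ℝ := fun x => ψ x * (deriv (arctanTrunc b R) (u x) * ⟪X x, Du x⟫)
  have hP_nonneg : ∀ x ∈ Ω, 0 ≤ P x := fun x hx =>
    mul_nonneg (hψ_mem x).1 (mul_nonneg (deriv_arctanTrunc_nonneg hR.ne') (hXu x hx))
  have hP_ge : ∀ x ∈ S, ⟪X x, Du x⟫ ≤ 2 * P x := fun x hx => by
    simp only [P, hψ_one x (hSR x hx).1, one_mul]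
    nlinarith [half_le_deriv_arctanTrunc (b := b) hR (hSR x hx).2, hXu x (hSΩ hx)]
  calc ∫ x in S, ⟪X x, Du x⟫ ∂μ ≤ 2 * ∫ x in Ω, P x ∂μ :=
        setIntegral_le_const_mul_setIntegral hS hΩ.measurableSet hSΩ zero_le_two hint
          (fun x hx => hXu x (hSΩ hx)) hP_ge hP_nonneg
    _ ≤ 2 * (C * μ.real (Ω ∩ ball 0 (4 * R))) := by gcongr
    _ ≤ max (2 * C) 1 * μ.real (Ω ∩ ball 0 (4 * R)) := by
        rw [← mul_assoc]
        gcongr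
        exact le_max_left _ _

end WeakDivEq

end FluxEstimate

theorem measurableSet_inter_sqrt_sublevel {E : Type*} [NormedAddCommGroup E] [MeasurableSpace E]
    [BorelSpace E] {Ω : Set E} {u : E → ℝ} (hΩ : MeasurableSet Ω)
    (hu : ContinuousOn u (closure Ω)) (R : ℝ) :
    MeasurableSet (Ω ∩ {x | √(‖x‖ ^ 2 + u x ^ 2) ≤ R}) := by
  have hρ : ContinuousOn (fun x => √(‖x‖ ^ 2 + u x ^ 2)) (closure Ω) :=
    ((continuous_norm.continuousOn.pow 2).add (hu.pow 2)).sqrt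
  have hclosed := hρ.preimage_isClosed_of_isClosed isClosed_closure (isClosed_Iic (a := R))
  convert hΩ.inter hclosed.measurableSet using 1
  rw [← inter_assoc, inter_eq_left.2 subset_closure]
  rfl

theorem norm_le_and_abs_le_of_sqrt_le {E : Type*} [SeminormedAddGroup E] {x : E} {t R : ℝ}
    (h : √(‖x‖ ^ 2 + t ^ 2) ≤ R) : ‖x‖ ≤ R ∧ |t| ≤ R := by
  constructor
  · rw [← abs_norm x]
    exact (Real.abs_le_sqrt (le_add_of_nonneg_right (sq_nonneg t))).trans h
  · exact (Real.abs_le_sqrt (le_add_of_nonneg_left (sq_nonneg _))).trans h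

theorem norm_smul_norm_le_of_bounded {E : Type*} [SeminormedAddCommGroup E] [NormedSpace ℝ E]
    {a : ℝ → ℝ} {L : ℝ} (ha0 : ∀ t ≥ 0, 0 ≤ a t) (hL : ∀ t > 0, t * a t ≤ L) (v : E) :
    ‖a ‖v‖ • v‖ ≤ max L 0 := by
  rw [norm_smul_of_nonneg (ha0 _ (norm_nonneg v)), mul_comm]
  rcases (norm_nonneg v).eq_or_lt with hv | hv
  · rw [← hv, zero_mul]
    exact le_max_right _ _
  · exact (hL _ hv).trans (le_max_left _ _)

theorem exists_eq_const_or_of_pairwise {α β : Type*} [Nonempty β] {s : Set α} {P : α → Prop}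
    {u : α → β} (h : ∀ p ∈ s, ∀ q ∈ s, ¬ P p → ¬ P q → u p = u q) :
    ∃ b, ∀ x ∈ s, u x = b ∨ P x := by
  by_cases hP : ∃ p ∈ s, ¬ P p
  · obtain ⟨p, hp, hPp⟩ := hP
    exact ⟨u p, fun x hx => or_iff_not_imp_right.2 fun hPx => h x hx p hp hPx hPp⟩
  · push Not at hP
    exact ⟨Classical.arbitrary β, fun x hx => Or.inr (hP x hx)⟩

theorem calibration_estimate_constant_boundary_general {E : Type*} [NormedAddCommGroup E]
    [InnerProductSpace ℝ E] [FiniteDimensional ℝ E] [MeasurableSpace E] [BorelSpace E]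
    (μ : Measure E) [μ.IsAddHaarMeasure] {Ω : Set E} {η : E → E} (hΩ : IsOpen Ω)
    (hη : HasC1Boundary Ω η) {a : ℝ → ℝ} (hac : ContinuousOn a (Ici 0))
    (ha0 : ∀ t ≥ 0, 0 ≤ a t) (hbd : ∃ Cb, ∀ t > 0, t * a t ≤ Cb) {F u : E → ℝ} {Du : E → E}
    (hF : ContinuousOn F (closure Ω)) (hu : HasGradientUpTo u Du Ω)
    (hdiv : WeakDivEq μ (fun x => a ‖Du x‖ • Du x) F Ω)
    (hconst : ∀ p ∈ frontier Ω, ∀ q ∈ frontier Ω,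
      ⟪Du p, η p⟫ ≠ 0 → ⟪Du q, η q⟫ ≠ 0 → u p = u q)
    {C₀ : ℝ} (hC₀ : ∀ x ∈ Ω, F x ∈ Icc (-C₀) 0) (hinf : BddBelow (u '' Ω)) :
    ∃ C > (0 : ℝ), ∀ R > 0,
      ∫ x in Ω ∩ {x | √(‖x‖ ^ 2 + u x ^ 2) ≤ R}, a ‖gradient u x‖ * ‖gradient u x‖ ^ 2 ∂μ
        ≤ C * μ.real (Ω ∩ ball 0 (4 * R)) := by
  obtain ⟨b, hb⟩ := exists_eq_const_or_of_pairwise hconst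
  obtain ⟨L, hL⟩ := hbd
  have hX : ContinuousOn (fun x => a ‖Du x‖ • Du x) (closure Ω) :=
    (hac.comp hu.continuousOn_gradient.norm fun x _ => norm_nonneg (Du x)).smul
      hu.continuousOn_gradient
  have hXu : ∀ x, ⟪a ‖Du x‖ • Du x, Du x⟫ = a ‖Du x‖ * ‖Du x‖ ^ 2 := fun x => by
    rw [real_inner_smul_left, real_inner_self_eq_norm_sq]
  obtain ⟨C, hC, hest⟩ := hdiv.exists_setIntegral_flux_le hΩ hX hF hη hu
    (fun x hx => (hb x hx).imp_right fun h => by rw [real_inner_smul_left, h, mul_zero])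
    (fun x _ => norm_smul_norm_le_of_bounded ha0 hL (Du x))
    (fun x _ => hXu x ▸ mul_nonneg (ha0 _ (norm_nonneg _)) (sq_nonneg _)) hC₀ hinf
  refine ⟨C, hC, fun R hR => ?_⟩
  have hS := measurableSet_inter_sqrt_sublevel hΩ.measurableSet hu.continuousOn R
  refine (setIntegral_congr_fun hS fun x hx => ?_).trans_le
    (hest R hR _ hS inter_subset_left fun x hx => norm_le_and_abs_le_of_sqrt_le hx.2)
  simp only [hXu, (hu.hasGradientAt x hx.1).gradient]

theorem IsCkDomainWithNormal.isOpen {k : ℕ∞} {Ω : Set (EuclideanSpace ℝ (Fin n))}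
    {η : EuclideanSpace ℝ (Fin n) → EuclideanSpace ℝ (Fin n)}
    (h : IsCkDomainWithNormal k Ω η) : IsOpen Ω :=
  h.2.1

theorem IsCkDomainWithNormal.hasC1Boundary {k : ℕ∞} {Ω : Set (EuclideanSpace ℝ (Fin n))}
    {η : EuclideanSpace ℝ (Fin n) → EuclideanSpace ℝ (Fin n)}
    (h : IsCkDomainWithNormal k Ω η) (hk : 1 ≤ k) : HasC1Boundary Ω η := by
  intro p hp
  obtain ⟨V, g, hV, hpV, hg, hgrad, hΩV, hηp⟩ := h.2.2.2 p hp
  exact ⟨V, g, hpV, ⟨hV, hg.of_le (by exact_mod_cast hk), hgrad, hΩV⟩, hηp⟩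

/-- Proposition 2.7(ii) of the paper, in `ℝⁿ` with `Ω₀ = Ω`: the calibration estimate
when `u` is constant on `∂⋆Ω`, `-C₀ ≤ f(u) ≤ 0` and `u` is bounded below. -/
theorem calibration_estimate_constant_boundary
    (n : ℕ) (Ω : Set (EuclideanSpace ℝ (Fin n)))
    (η : EuclideanSpace ℝ (Fin n) → EuclideanSpace ℝ (Fin n))
    (hΩ : IsCkDomainWithNormal 1 Ω η)
    (a : ℝ → ℝ) (hac : ContinuousOn a (Ici 0)) (ha0 : ∀ t ≥ (0 : ℝ), 0 ≤ a t)
    (hbd : ∃ Cb, ∀ t > (0 : ℝ), t * a t ≤ Cb)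
    (hlip : ∀ t ∈ Ici (0 : ℝ), ∃ V ∈ 𝓝[Ici (0 : ℝ)] t,
      ∃ K, LipschitzOnWith K (fun s => s * a s) V)
    (f : ℝ → ℝ) (hf : Continuous f)
    (u : EuclideanSpace ℝ (Fin n) → ℝ)
    (hu2 : ContDiffOn ℝ 2 u Ω) (hucl : ContinuousOn u (closure Ω))
    (Du : EuclideanSpace ℝ (Fin n) → EuclideanSpace ℝ (Fin n))
    (hDu : ∀ x ∈ Ω, Du x = gradient u x) (hDuc : ContinuousOn Du (closure Ω))
    (hsol : IsWeakSolution a f Ω u)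
    (hconst : ∀ p ∈ frontier Ω, ∀ q ∈ frontier Ω,
      ⟪Du p, η p⟫ ≠ 0 → ⟪Du q, η q⟫ ≠ 0 → u p = u q)
    (C₀ : ℝ) (hC₀ : 0 ≤ C₀)
    (hfu : ∀ x ∈ Ω, -C₀ ≤ f (u x) ∧ f (u x) ≤ 0)
    (hinf : BddBelow (u '' Ω)) :
    ∃ C > (0 : ℝ), ∃ R₀ : ℝ, ∀ R ≥ R₀,
      ∫ x in Ω ∩ {x | Real.sqrt (‖x‖ ^ 2 + u x ^ 2) ≤ R},
          a ‖gradient u x‖ * ‖gradient u x‖ ^ 2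
        ≤ C * (volume (Ω ∩ Metric.ball (0 : EuclideanSpace ℝ (Fin n)) (4 * R))).toReal := by
  have hu : HasGradientUpTo u Du Ω := ⟨hucl, hDuc, fun x hx => hDu x hx ▸
    ((hu2.contDiffAt (hΩ.isOpen.mem_nhds hx)).differentiableAt two_ne_zero).hasGradientAt⟩
  obtain ⟨C, hC, hest⟩ := calibration_estimate_constant_boundary_general volume hΩ.isOpen
    (hΩ.hasC1Boundary le_rfl) hac ha0 hbd (hf.comp_continuousOn hucl) hu
    (hsol.weakDivEq hΩ.isOpen hac hf hu) hconst hfu hinf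
  exact ⟨C, hC, 1, fun R hR => hest R (one_pos.trans_le hR)⟩
end
end
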